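/- arXiv:2107.11563 — 9 statements merged into one kernel-verified Lean document; each statement's English description precedes it below -/
import Mathlib

section
/- Let n ≥ 2 and suppose there exists a normalized symmetric conference matrix of order n. Then there exists a signing σ of the complete graph K_{n+1} such that every eigenvalue of the signed adjacency matrix A^σ has absolute value at most 2√(n−1); that is, K_{n+1} (which is n-regular) has a good signing. -/
open Matrix

/-!
Border `C` by a new vertex joined to everything with sign `+1`, so that
`A = [[0, 1ᵀ], [1, C]]`. As the first row of `C` is also all ones off the diagonal, the new vertex
and vertex `0` are twins. Let `(x, w)` be an eigenvector for `μ` and put `t = n - 1 ≥ 1`. The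
equations at the twins give `(μ + 1) (x - w₀) = 0`, so either `μ = -1`, or `x = w₀`. In the second
case, applying `C` to `C w = μ w - x 1` and using `C² = t I` at coordinate `0` yields
`x (μ² - μ - 2 t) = 0`. If `x = 0`, then `w` is an eigenvector of `C` and `μ² = t`; otherwise
`μ² = μ + 2 t`. In every case `μ² ≤ 4 t`.
-/

/-- The matrix `C` bordered by a new first row and column of ones (and a zero corner). -/
def borderOnes {n : ℕ} (C : Matrix (Fin n) (Fin n) ℝ) : Matrix (Fin (n + 1)) (Fin (n + 1)) ℝ :=
  Matrix.of (Fin.cons (Fin.cons 0 fun _ => 1) fun i => Fin.cons 1 (C i))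

/-- Suppose there exists a normalized symmetric conference matrix of
order `n ≥ 2` (symmetric, zero diagonal, off-diagonal entries `±1`, `C Cᵀ = (n-1) I`,
with all off-diagonal entries of the first row equal to `1`). Then the complete graph
`K_{n+1}` has a signing `σ` (its signed adjacency matrix `A` being a symmetric
matrix with zero diagonal and off-diagonal entries `±1`) such that every eigenvalue of
`A^σ` has absolute value at most `2√(n-1)`; i.e. `K_{n+1}` has a good signing. -/
theorem good_signing_complete_graph_5 (n : ℕ) (hn : 2 ≤ n)
    (C : Matrix (Fin n) (Fin n) ℝ)
    (hsym : C.IsSymm)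
    (hdiag : ∀ i, C i i = 0)
    (hoff : ∀ i j, i ≠ j → C i j = 1 ∨ C i j = -1)
    (hconf : C * Cᵀ = ((n : ℝ) - 1) • 1)
    (hnorm : ∀ j : Fin n, j.1 ≠ 0 → C ⟨0, by omega⟩ j = 1) :
    ∃ A : Matrix (Fin (n + 1)) (Fin (n + 1)) ℝ,
      A.IsSymm ∧ (∀ i, A i i = 0) ∧ (∀ i j, i ≠ j → A i j = 1 ∨ A i j = -1) ∧
      ∀ (μ : ℝ) (X : Fin (n + 1) → ℝ), X ≠ 0 → A.mulVec X = μ • X →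
        |μ| ≤ 2 * Real.sqrt ((n : ℝ) - 1) := by
  obtain ⟨m, rfl⟩ : ∃ m, n = m + 1 := ⟨n - 1, by omega⟩
  have hm : (1 : ℝ) ≤ m := by exact_mod_cast (by omega : 1 ≤ m)
  have ht : ((m + 1 : ℕ) : ℝ) - 1 = m := by push_cast; ring
  rw [ht] at hconf ⊢
  have hrow : ∀ j : Fin m, C 0 j.succ = 1 := fun j => hnorm j.succ (by simp)
  -- Thanks to the normalization, row `0` of `C` sums all coordinates other than `0`.
  have hC0 : ∀ v : Fin (m + 1) → ℝ, (C *ᵥ v) 0 = ∑ j : Fin m, v j.succ := fun v => by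
    simp [Matrix.mulVec, dotProduct, Fin.sum_univ_succ, hdiag, hrow]
  refine ⟨borderOnes C, ?_, ?_, ?_, ?_⟩
  · refine Matrix.IsSymm.ext fun i j => ?_
    cases i using Fin.cases <;> cases j using Fin.cases <;> simp [borderOnes, hsym.apply]
  · intro i
    cases i using Fin.cases <;> simp [borderOnes, hdiag]
  · intro i j hij
    cases i using Fin.cases with
    | zero =>
      cases j using Fin.cases with
      | zero => exact absurd rfl hij
      | succ j => simp [borderOnes]
    | succ i =>
      cases j using Fin.cases with
      | zero => simp [borderOnes]
      | succ j => simpa [borderOnes] using hoff i j fun h => hij (by rw [h])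
  intro μ X hX hμ
  suffices h : μ ^ 2 ≤ 4 * m by
    have h2 : (2 : ℝ) * √m = √(4 * m) := by
      rw [Real.sqrt_mul (by norm_num), show (4 : ℝ) = 2 ^ 2 by norm_num,
        Real.sqrt_sq (by norm_num)]
    rw [h2]
    exact Real.abs_le_sqrt h
  obtain ⟨x, w, rfl⟩ : ∃ x w, X = Fin.cons x w := ⟨X 0, Fin.tail X, (Fin.cons_self_tail X).symm⟩
  have hnew : w 0 + ∑ j : Fin m, w j.succ = μ * x := by
    have h := congrFun hμ 0
    simp only [Matrix.mulVec, dotProduct] at h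
    rw [Fin.sum_univ_succ, Fin.sum_univ_succ] at h
    simpa [borderOnes] using h
  have hold : ∀ i, x + (C *ᵥ w) i = μ * w i := fun i => by
    have h := congrFun hμ i.succ
    simp only [Matrix.mulVec, dotProduct] at h
    rw [Fin.sum_univ_succ] at h
    simpa [borderOnes, Matrix.mulVec, dotProduct] using h
  have hCC : C *ᵥ (C *ᵥ w) = (m : ℝ) • w := by
    rw [hsym.eq] at hconf
    rw [Matrix.mulVec_mulVec, hconf, Matrix.smul_mulVec, Matrix.one_mulVec]
  have hold0 := hold 0
  rw [hC0] at hold0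
  have htwin : (μ + 1) * (x - w 0) = 0 := by linear_combination hold0 - hnew
  rcases mul_eq_zero.mp htwin with h | h
  · obtain rfl : μ = -1 := by linarith
    linarith
  -- Coordinate `0` of `C (C w) = m w`, with `C w` replaced by `μ w - x 1`.
  have hq : μ * (∑ j : Fin m, w j.succ) - m * x = m * w 0 := by
    have h0 := congrFun hCC 0
    rw [hC0] at h0
    simp only [fun i => eq_sub_of_add_eq' (hold i), Finset.sum_sub_distrib, ← Finset.mul_sum] at h0
    simpa using h0
  have hx : x * (μ ^ 2 - μ - 2 * m) = 0 := by
    linear_combination hq - μ * hnew - (μ + m) * h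
  rcases mul_eq_zero.mp hx with hx0 | hquad
  · subst hx0
    have hw : C *ᵥ w = μ • w := by
      ext i
      simpa using hold i
    obtain ⟨i, hi⟩ : ∃ i, w i ≠ 0 := by
      by_contra! hw0
      refine hX (funext fun i => ?_)
      cases i using Fin.cases <;> simp [hw0]
    rw [hw, Matrix.mulVec_smul, hw] at hCC
    have hi' := congrFun hCC i
    simp only [Pi.smul_apply, smul_eq_mul] at hi'
    have : μ ^ 2 = m := mul_right_cancel₀ hi (by linear_combination hi')
    linarith
  · -- A root of `μ² - μ = 2 m` exceeding `2 m ≥ 2` would satisfy `μ (μ - 1) > 2 m`.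
    have : μ ≤ 2 * m := by
      by_contra! hlt
      nlinarith
    linarith
end

section
/- Let n ≥ 2 and suppose there exists a normalized symmetric conference matrix of order n. Then there exists a signing σ of the complete graph K_{n+2} such that every eigenvalue of the signed adjacency matrix A^σ has absolute value at most 2√n; that is, K_{n+2} (which is (n+1)-regular) has a good signing. -/
/-!
Border `C` by two vertices: `A = [[C, B], [Bᵀ, D]]` with `D = [[0, 1], [1, 0]]`, where for two
distinct indices `p ≠ q` the columns of `B` are `C p + e_p` and `C q - e_q` (row `p` or `q` of `C`
with its zero diagonal entry replaced by `1` or `-1`). These columns have entries `±1` and squared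
length `n`, and they are orthogonal: the rows of `C` are, and the two correction terms `C q p` and
`-C p q` cancel by symmetry. Hence `BᵀB = n`, `CᵀC = n - 1` and `DᵀD = 1`, so all three blocks have
operator norm at most `r = √n`. For `X = (x, y)` this gives
`|X ⬝ A X| ≤ r |x|² + 2 r |x| |y| + r |y|² ≤ 2 r (|x|² + |y|²)`, which bounds every eigenvalue.
-/

open Matrix

/-- Cauchy-Schwarz combined with the arithmetic-geometric mean inequality, for a matrix `M`
which multiplies lengths by `√c ≤ r`. -/
lemma abs_bilin_le {α β : Type*} [Fintype α] [Fintype β] [DecidableEq β]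
    (M : Matrix α β ℝ) {r c : ℝ} (hr : 0 < r) (hc : c ≤ r ^ 2)
    (hM : Mᵀ * M = c • (1 : Matrix β β ℝ)) (u : α → ℝ) (v : β → ℝ) :
    2 * |u ⬝ᵥ M *ᵥ v| ≤ r * (u ⬝ᵥ u + v ⬝ᵥ v) := by
  have hMv : (M *ᵥ v) ⬝ᵥ (M *ᵥ v) = c * (v ⬝ᵥ v) := by
    rw [dotProduct_mulVec, ← mulVec_transpose, mulVec_mulVec, hM, smul_mulVec, one_mulVec,
      smul_dotProduct, smul_eq_mul]
  have nonneg_self : ∀ w : α → ℝ, 0 ≤ w ⬝ᵥ w := fun w =>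
    Finset.sum_nonneg fun i _ => mul_self_nonneg _
  have hv : 0 ≤ v ⬝ᵥ v := Finset.sum_nonneg fun i _ => mul_self_nonneg _
  have h1 := nonneg_self (r • u + M *ᵥ v)
  have h2 := nonneg_self (r • u - M *ᵥ v)
  simp only [add_dotProduct, dotProduct_add, sub_dotProduct, dotProduct_sub, smul_dotProduct,
    dotProduct_smul, smul_eq_mul, hMv, dotProduct_comm (M *ᵥ v) u] at h1 h2
  have h3 := mul_le_mul_of_nonneg_right hc hv
  rw [← abs_two, ← abs_mul, abs_le]
  constructor <;> refine le_of_mul_le_mul_left ?_ hr <;> linarith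

/-- Each block is a multiple, by a factor at most `r`, of an isometry, so the three pieces of the
quadratic form at `X = (x, y)` are controlled by `abs_bilin_le` and sum to at most
`2 r (|x|² + |y|²)`. -/
lemma abs_eigenvalue_fromBlocks_le {α β : Type*} [Fintype α] [Fintype β] [DecidableEq α]
    [DecidableEq β] (C : Matrix α α ℝ) (B : Matrix α β ℝ) (D : Matrix β β ℝ) {r a b d : ℝ}
    (hr : 0 < r) (ha : a ≤ r ^ 2) (hb : b ≤ r ^ 2) (hd : d ≤ r ^ 2)
    (hC : Cᵀ * C = a • (1 : Matrix α α ℝ)) (hB : Bᵀ * B = b • (1 : Matrix β β ℝ))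
    (hD : Dᵀ * D = d • (1 : Matrix β β ℝ)) (μ : ℝ) (X : α ⊕ β → ℝ) (hX : X ≠ 0)
    (h : fromBlocks C B Bᵀ D *ᵥ X = μ • X) : |μ| ≤ 2 * r := by
  obtain ⟨x, y, rfl⟩ : ∃ x y, X = Sum.elim x y := ⟨_, _, (Sum.elim_comp_inl_inr X).symm⟩
  have hpos : 0 < x ⬝ᵥ x + y ⬝ᵥ y := by
    have := (dotProduct_self_star_pos_iff (v := Sum.elim x y)).2 hX
    simpa using this
  have hq := congrArg (fun Z => Sum.elim x y ⬝ᵥ Z) h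
  simp only [fromBlocks_mulVec, Sum.elim_comp_inl, Sum.elim_comp_inr, dotProduct_smul,
    sumElim_dotProduct_sumElim, dotProduct_add, smul_eq_mul] at hq
  have hBt : y ⬝ᵥ Bᵀ *ᵥ x = x ⬝ᵥ B *ᵥ y := by
    rw [mulVec_transpose, dotProduct_comm, ← dotProduct_mulVec]
  rw [hBt] at hq
  have h1 := abs_bilin_le C hr ha hC x x
  have h2 := abs_bilin_le B hr hb hB x y
  have h3 := abs_bilin_le D hr hd hD y y
  refine le_of_mul_le_mul_right ?_ hpos
  rw [← abs_of_pos hpos, ← abs_mul, ← hq, abs_of_pos hpos]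
  have t1 := abs_add_le (x ⬝ᵥ C *ᵥ x + x ⬝ᵥ B *ᵥ y) (x ⬝ᵥ B *ᵥ y + y ⬝ᵥ D *ᵥ y)
  have t2 := abs_add_le (x ⬝ᵥ C *ᵥ x) (x ⬝ᵥ B *ᵥ y)
  have t3 := abs_add_le (x ⬝ᵥ B *ᵥ y) (y ⬝ᵥ D *ᵥ y)
  linarith

/-- The two bordering columns: rows `p` and `q` of `C` with the diagonal entry changed by `1` and
`-1` respectively. -/
def borderColumns {n : ℕ} (C : Matrix (Fin n) (Fin n) ℝ) (p q : Fin n) :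
    Matrix (Fin n) (Fin 2) ℝ :=
  (of ![C p + Pi.single p 1, C q - Pi.single q 1])ᵀ

lemma borderColumns_transpose_mul_self {n : ℕ} (C : Matrix (Fin n) (Fin n) ℝ) (p q : Fin n)
    (hpq : p ≠ q) (hsym : C.IsSymm) (hdiag : ∀ i, C i i = 0)
    (hconf : C * Cᵀ = ((n : ℝ) - 1) • 1) :
    (borderColumns C p q)ᵀ * borderColumns C p q = (n : ℝ) • (1 : Matrix (Fin 2) (Fin 2) ℝ) := by
  have hrow : ∀ i j, C i ⬝ᵥ C j = ((n : ℝ) - 1) * (1 : Matrix (Fin n) (Fin n) ℝ) i j :=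
    fun i j => congrFun (congrFun hconf i) j
  have hs : C p q = C q p := hsym.apply q p
  ext k l
  change (![C p + Pi.single p 1, C q - Pi.single q 1] : Fin 2 → Fin n → ℝ) k ⬝ᵥ
    (![C p + Pi.single p 1, C q - Pi.single q 1] : Fin 2 → Fin n → ℝ) l = _
  fin_cases k <;> fin_cases l <;>
    simp [hrow, hdiag, hs, hpq, hpq.symm]

lemma borderColumns_apply {n : ℕ} (C : Matrix (Fin n) (Fin n) ℝ) (p q : Fin n)
    (hdiag : ∀ i, C i i = 0) (hoff : ∀ i j, i ≠ j → C i j = 1 ∨ C i j = -1)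
    (i : Fin n) (k : Fin 2) : borderColumns C p q i k = 1 ∨ borderColumns C p q i k = -1 := by
  fin_cases k
  · by_cases h : i = p
    · subst h; simp [borderColumns, hdiag]
    · simpa [borderColumns, h] using hoff p i (Ne.symm h)
  · by_cases h : i = q
    · subst h; simp [borderColumns, hdiag]
    · simpa [borderColumns, h] using hoff q i (Ne.symm h)

/-- Suppose there exists a normalized symmetric conference matrix of
order `n ≥ 2` (symmetric, zero diagonal, off-diagonal entries `±1`, `C Cᵀ = (n-1) I`,
with all off-diagonal entries of the first row equal to `1`). Then the complete graph
`K_{n+2}` has a signing `σ` (its signed adjacency matrix `A` being a symmetric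
matrix with zero diagonal and off-diagonal entries `±1`) such that every eigenvalue of
`A^σ` has absolute value at most `2√(n)`; i.e. `K_{n+2}` has a good signing. -/
theorem good_signing_complete_graph_6 (n : ℕ) (hn : 2 ≤ n)
    (C : Matrix (Fin n) (Fin n) ℝ)
    (hsym : C.IsSymm)
    (hdiag : ∀ i, C i i = 0)
    (hoff : ∀ i j, i ≠ j → C i j = 1 ∨ C i j = -1)
    (hconf : C * Cᵀ = ((n : ℝ) - 1) • 1)
    (hnorm : ∀ j : Fin n, j.1 ≠ 0 → C ⟨0, by omega⟩ j = 1) :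
    ∃ A : Matrix (Fin (n + 2)) (Fin (n + 2)) ℝ,
      A.IsSymm ∧ (∀ i, A i i = 0) ∧ (∀ i j, i ≠ j → A i j = 1 ∨ A i j = -1) ∧
      ∀ (μ : ℝ) (X : Fin (n + 2) → ℝ), X ≠ 0 → A.mulVec X = μ • X →
        |μ| ≤ 2 * Real.sqrt ((n : ℝ)) := by
  let p : Fin n := ⟨0, by omega⟩
  let q : Fin n := ⟨1, by omega⟩
  have hpq : p ≠ q := by simp [p, q]
  set B := borderColumns C p q with hBdef
  have hB := borderColumns_transpose_mul_self C p q hpq hsym hdiag hconf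
  have hB1 := borderColumns_apply C p q hdiag hoff
  rw [← hBdef] at hB hB1
  let D : Matrix (Fin 2) (Fin 2) ℝ := !![0, 1; 1, 0]
  have hDs : D.IsSymm := by
    ext i j; fin_cases i <;> fin_cases j <;> simp [D]
  have hD : Dᵀ * D = (1 : ℝ) • (1 : Matrix (Fin 2) (Fin 2) ℝ) := by
    rw [hDs.eq]; ext i j; fin_cases i <;> fin_cases j <;> simp [D]
  have hC : Cᵀ * C = ((n : ℝ) - 1) • (1 : Matrix (Fin n) (Fin n) ℝ) := by
    rw [← hconf, hsym.eq]
  have hn' : (2 : ℝ) ≤ n := by exact_mod_cast hn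
  have hsq : Real.sqrt n ^ 2 = n := Real.sq_sqrt (by linarith)
  let e : Fin n ⊕ Fin 2 ≃ Fin (n + 2) := finSumFinEquiv
  let M := fromBlocks C B Bᵀ D
  refine ⟨M.submatrix e.symm e.symm, ?_, ?_, ?_, ?_⟩
  · exact (IsSymm.fromBlocks hsym rfl hDs).submatrix _
  · intro i
    rw [submatrix_apply]
    rcases e.symm i with i | k
    · exact hdiag i
    · fin_cases k <;> simp [M, D]
  · intro i j hij
    have hne : e.symm i ≠ e.symm j := e.symm.injective.ne hij
    rw [submatrix_apply]
    revert hne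
    rcases e.symm i with i | k <;> rcases e.symm j with j | l <;> intro hne
    · exact hoff i j fun h => hne (congrArg _ h)
    · exact hB1 i l
    · exact hB1 j k
    · fin_cases k <;> fin_cases l <;> simp [M, D] at hne ⊢
  · intro μ X hX hμ
    refine abs_eigenvalue_fromBlocks_le C B D (Real.sqrt_pos.2 (by linarith)) (by linarith)
      hsq.ge (by linarith) hC hB hD μ (X ∘ e) ?_ ?_
    · intro h
      refine hX (funext fun i => ?_)
      simpa using congrFun h (e.symm i)
    · rw [submatrix_mulVec_equiv, Equiv.symm_symm] at hμ
      funext i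
      simpa [M] using congrFun hμ (e i)
end

section
/- Let n ≥ 2 and suppose there exists a normalized symmetric conference matrix of order n. Then there exists a signing σ of the complete graph K_{n+3} such that every eigenvalue of the signed adjacency matrix A^σ has absolute value at most 2√(n+1); that is, K_{n+3} (which is (n+2)-regular) has a good signing. -/
open Matrix

/-!
Write the conference matrix as `C = [0 1ᵀ; 1 S]`; since the rows of `C` are orthogonal, the core `S`
has vanishing row sums. Three vertices `f₁, f₂, f₃` are added, joined positively to every vertex
except the first one, `e`. Thus `e, f₁, f₂, f₃` all look alike from the remaining `n - 1` vertices.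
The signs inside the `K₄` on `e, f₁, f₂, f₃` are positive on the path `e f₁ f₂ f₃` and negative on
the complementary path; call this signing `K`. With `w = (-1, 1, 1, -1)` one has `K 1 = w` and
`K w = 1`.

Let `(x, y)` be an eigenvector with eigenvalue `μ`, `z` its restriction to `e, f₁, f₂, f₃`, and `t`
the sum of the other coordinates. Summing the eigenvector equations gives
`μ t = (n - 1) (1 · z)`, `μ (1 · z) = 4 t + w · z` and `μ (w · z) = 1 · z`. Hence

* if `1 · z ≠ 0`, then `μ² = 4 (n - 1) + 1 ≤ 4 (n + 1)`;
* if `1 · z = 0`, `z ≠ 0` and `μ ≠ 0`, then `t = w · z = 0`, so `K z = μ z` with `z` orthogonal to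
  `1` and `w`, where `K² = 5`; thus `μ² = 5`;
* if `z = 0`, then `C x = μ x` with `x ≠ 0`, so `μ² = n - 1`.
-/

/-- The signing of the edges between the conference graph on `Fin (m + 1)` and the three new
vertices. -/
def joinBlock (m : ℕ) : Matrix (Fin (m + 1)) (Fin 3) ℝ :=
  Matrix.of (Fin.cons ![1, -1, -1] fun _ => ![1, 1, 1])

/-- The signing of the triangle on the three new vertices. -/
def triangleBlock : Matrix (Fin 3) (Fin 3) ℝ :=
  !![0, 1, -1; 1, 0, 1; -1, 1, 0]

/-- Row `0` of `C` is `(0, 1, …, 1)`, so orthogonality of the rows makes the core of `C` have zero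
row sums. -/
lemma core_row_sum {m : ℕ} {C : Matrix (Fin (m + 1)) (Fin (m + 1)) ℝ}
    (hdiag : ∀ i, C i i = 0) (hconf : C * Cᵀ = (m : ℝ) • 1)
    (hnorm : ∀ j : Fin m, C 0 j.succ = 1) (j : Fin m) :
    ∑ k : Fin m, C j.succ k.succ = 0 := by
  have h := congrFun (congrFun hconf j.succ) 0
  simpa [Matrix.mul_apply, Fin.sum_univ_succ, hdiag, hnorm, Matrix.one_apply] using h

/-- The eigenvalue bound in coordinates, `(x, y)` being the eigenvector. -/
lemma eigenvalue_sq_le {m : ℕ} (hm : 1 ≤ m) {C : Matrix (Fin (m + 1)) (Fin (m + 1)) ℝ}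
    (hsym : C.IsSymm) (hdiag : ∀ i, C i i = 0) (hconf : C * Cᵀ = (m : ℝ) • 1)
    (hnorm : ∀ j : Fin m, C 0 j.succ = 1)
    (μ : ℝ) (x : Fin (m + 1) → ℝ) (y : Fin 3 → ℝ) (hxy : ¬ (x = 0 ∧ y = 0))
    (hx : C *ᵥ x + joinBlock m *ᵥ y = μ • x)
    (hy : (joinBlock m)ᵀ *ᵥ x + triangleBlock *ᵥ y = μ • y) :
    μ ^ 2 ≤ 4 * ((m : ℝ) + 2) := by
  have hm' : (1 : ℝ) ≤ m := by exact_mod_cast hm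
  obtain ⟨t, ht⟩ : ∃ t, t = ∑ j : Fin m, x j.succ := ⟨_, rfl⟩
  have e0 : t + (y 0 - y 1 - y 2) = μ * x 0 := by
    have h := congrFun hx 0
    simp [Matrix.mulVec, dotProduct, Fin.sum_univ_succ, hdiag, hnorm, joinBlock, ← ht] at h
    linarith
  have ej : ∀ j : Fin m, x 0 + ∑ k : Fin m, C j.succ k.succ * x k.succ + (y 0 + y 1 + y 2)
      = μ * x j.succ := by
    intro j
    have h := congrFun hx j.succ
    have hc : C j.succ 0 = 1 := by rw [← hsym.apply]; exact hnorm j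
    rw [← smul_eq_mul, ← Pi.smul_apply, ← h, Pi.add_apply, Matrix.mulVec, Matrix.mulVec, dotProduct,
      dotProduct, Fin.sum_univ_succ, Fin.sum_univ_three, hc]
    simp [joinBlock]
  have f0 : x 0 + t + (y 1 - y 2) = μ * y 0 := by
    have h := congrFun hy 0
    simp [Matrix.mulVec, dotProduct, Fin.sum_univ_succ, joinBlock, triangleBlock, ← ht] at h
    linarith
  have f1 : -x 0 + t + (y 0 + y 2) = μ * y 1 := by
    have h := congrFun hy 1
    simp [Matrix.mulVec, dotProduct, Fin.sum_univ_succ, joinBlock, triangleBlock, ← ht] at h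
    linarith
  have f2 : -x 0 + t + (-y 0 + y 1) = μ * y 2 := by
    have h := congrFun hy 2
    simp [Matrix.mulVec, dotProduct, Fin.sum_univ_succ, joinBlock, triangleBlock, ← ht] at h
    linarith
  -- the core has zero column sums, so only the four special vertices contribute to `μ t`
  have et : (m : ℝ) * (x 0 + y 0 + y 1 + y 2) = μ * t := by
    have hcore : ∑ j : Fin m, ∑ k : Fin m, C j.succ k.succ * x k.succ = 0 := by
      rw [Finset.sum_comm]
      refine Finset.sum_eq_zero fun k _ => ?_
      rw [← Finset.sum_mul]
      have := core_row_sum hdiag hconf hnorm k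
      simp_rw [← hsym.apply k.succ] at this
      rw [this, zero_mul]
    have h : ∑ j : Fin m, (x 0 + ∑ k : Fin m, C j.succ k.succ * x k.succ + (y 0 + y 1 + y 2))
        = ∑ j : Fin m, μ * x j.succ := Finset.sum_congr rfl fun j _ => ej j
    rw [Finset.sum_add_distrib, Finset.sum_add_distrib, hcore, ← Finset.mul_sum, ← ht] at h
    simp at h
    linarith
  by_cases hS : x 0 + y 0 + y 1 + y 2 = 0
  swap
  · have h : μ ^ 2 = 4 * m + 1 := by
      apply mul_right_cancel₀ hS
      linear_combination (-μ + 1) * e0 + (-μ - 1) * f0 + (-μ - 1) * f1 + (-μ + 1) * f2 - 4 * et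
    linarith
  by_cases hμ : μ = 0
  · subst hμ; nlinarith
  have ht0 : t = 0 := by
    have : μ * t = 0 := by rw [← et, hS, mul_zero]
    exact (mul_eq_zero.mp this).resolve_left hμ
  have hW : -x 0 + y 0 + y 1 - y 2 = 0 := by
    linear_combination e0 + f0 + f1 + f2 - 4 * ht0 + μ * hS
  -- on the orthogonal complement of `1` and `w` the vector `z` has the shape `(a, b, -b, -a)`
  have h1 : y 1 = -y 0 := by linarith
  have h2 : y 2 = -x 0 := by linarith
  rw [h1, h2, ht0] at e0 f0
  by_cases hz : x 0 = 0 ∧ y 0 = 0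
  · obtain ⟨hx0, hy0⟩ := hz
    have hy' : y = 0 := by
      funext i
      fin_cases i <;> simp [hy0, h1, h2, hx0]
    have hx' : x ≠ 0 := fun h => hxy ⟨h, hy'⟩
    rw [hy', Matrix.mulVec_zero, add_zero] at hx
    have h : (m : ℝ) • x = (μ ^ 2) • x := by
      calc (m : ℝ) • x = (C * Cᵀ) *ᵥ x := by rw [hconf, Matrix.smul_mulVec, Matrix.one_mulVec]
        _ = (μ ^ 2) • x := by
          rw [hsym.eq, ← Matrix.mulVec_mulVec, hx, Matrix.mulVec_smul, hx, smul_smul, sq]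
    have := smul_left_injective ℝ hx' h
    linarith
  · have h5 : μ ^ 2 = 5 := by
      rw [not_and_or] at hz
      rcases hz with hz | hz
      · apply mul_right_cancel₀ hz
        linear_combination (-μ - 1) * e0 - 2 * f0
      · apply mul_right_cancel₀ hz
        linear_combination (-μ + 1) * f0 - 2 * e0
    linarith

/-- Suppose there exists a normalized symmetric conference matrix of
order `n ≥ 2` (symmetric, zero diagonal, off-diagonal entries `±1`, `C Cᵀ = (n-1) I`,
with all off-diagonal entries of the first row equal to `1`). Then the complete graph
`K_{n+3}` has a signing `σ` (its signed adjacency matrix `A` being a symmetric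
matrix with zero diagonal and off-diagonal entries `±1`) such that every eigenvalue of
`A^σ` has absolute value at most `2√(n+1)`; i.e. `K_{n+3}` has a good signing. -/
theorem good_signing_complete_graph_7 (n : ℕ) (hn : 2 ≤ n)
    (C : Matrix (Fin n) (Fin n) ℝ)
    (hsym : C.IsSymm)
    (hdiag : ∀ i, C i i = 0)
    (hoff : ∀ i j, i ≠ j → C i j = 1 ∨ C i j = -1)
    (hconf : C * Cᵀ = ((n : ℝ) - 1) • 1)
    (hnorm : ∀ j : Fin n, j.1 ≠ 0 → C ⟨0, by omega⟩ j = 1) :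
    ∃ A : Matrix (Fin (n + 3)) (Fin (n + 3)) ℝ,
      A.IsSymm ∧ (∀ i, A i i = 0) ∧ (∀ i j, i ≠ j → A i j = 1 ∨ A i j = -1) ∧
      ∀ (μ : ℝ) (X : Fin (n + 3) → ℝ), X ≠ 0 → A.mulVec X = μ • X →
        |μ| ≤ 2 * Real.sqrt ((n : ℝ) + 1) := by
  obtain ⟨m, rfl⟩ : ∃ m, n = m + 1 := ⟨n - 1, by omega⟩
  have hconf' : C * Cᵀ = (m : ℝ) • 1 := by rw [hconf]; push_cast; ring_nf
  have hnorm' : ∀ j : Fin m, C 0 j.succ = 1 := fun j => hnorm j.succ (by simp)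
  have hD : triangleBlockᵀ = triangleBlock := by
    ext i j; fin_cases i <;> fin_cases j <;> simp [triangleBlock]
  have hB : ∀ i j, joinBlock m i j = 1 ∨ joinBlock m i j = -1 := by
    intro i j
    refine Fin.cases ?_ (fun i => ?_) i <;> fin_cases j <;> simp [joinBlock]
  set M := Matrix.fromBlocks C (joinBlock m) (joinBlock m)ᵀ triangleBlock with hM
  have hMsym : M.IsSymm := Matrix.IsSymm.fromBlocks hsym rfl hD
  have hMdiag : ∀ i, M i i = 0 := by
    rintro (i | i)
    · exact hdiag i
    · fin_cases i <;> simp [hM, triangleBlock]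
  have hMoff : ∀ i j, i ≠ j → M i j = 1 ∨ M i j = -1 := by
    rintro (i | i) (j | j) hij
    · exact hoff i j fun h => hij (h ▸ rfl)
    · exact hB i j
    · exact hB j i
    · fin_cases i <;> fin_cases j <;> simp [hM, triangleBlock] at hij ⊢
  let e : Fin (m + 1 + 3) ≃ Fin (m + 1) ⊕ Fin 3 := finSumFinEquiv.symm
  refine ⟨M.submatrix e e, hMsym.submatrix e, fun i => hMdiag _,
    fun i j hij => hMoff _ _ (e.injective.ne hij), fun μ X hX h => ?_⟩
  rw [Matrix.submatrix_mulVec_equiv] at h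
  have h' : M *ᵥ (X ∘ e.symm) = μ • (X ∘ e.symm) := by
    funext i
    simpa using congrFun h (e.symm i)
  rw [hM, Matrix.fromBlocks_mulVec] at h'
  have key := eigenvalue_sq_le (by omega) hsym hdiag hconf' hnorm' μ
    ((X ∘ e.symm) ∘ Sum.inl) ((X ∘ e.symm) ∘ Sum.inr) ?_
    (funext fun i => congrFun h' (Sum.inl i)) (funext fun i => congrFun h' (Sum.inr i))
  · have : (2 : ℝ) * √(((m + 1 : ℕ) : ℝ) + 1) = √(4 * ((m : ℝ) + 2)) := by
      rw [Real.sqrt_mul (by norm_num), show (4 : ℝ) = 2 ^ 2 by norm_num,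
        Real.sqrt_sq (by norm_num)]
      push_cast
      ring_nf
    rw [this]
    exact Real.abs_le_sqrt key
  · rintro ⟨hx, hy⟩
    apply hX
    funext k
    obtain ⟨i | i, rfl⟩ := e.symm.surjective k
    · exact congrFun hx i
    · exact congrFun hy i
end

section
/- Let G be a finite simple graph whose edge set is partitioned into the edge sets of two spanning subgraphs H₁ and H₂, let σ₁ be a signing of H₁ with signed adjacency matrix S₁, and let σ₂ be a signing of H₂ with signed adjacency matrix S₂. Define a signing σ of the lexicographic product G ∘ K̄₂ (vertex set V(G) × {0,1}) whose signed adjacency matrix M satisfies M_{(x,i),(y,j)} = (S₁)_{xy} + (−1)^{i+j}(S₂)_{xy} for all x,y ∈ V(G) and i,j ∈ {0,1} (equivalently: each 4-cycle on {x,y}×{0,1} coming from an edge xy of H₁ gets constant sign σ₁(xy), and each 4-cycle coming from an edge xy of H₂ gets alternating signs starting with σ₂(xy)). Then ρ((G ∘ K̄₂)^σ) ≤ 2·max{ρ(H₁^{σ₁}), ρ(H₂^{σ₂})}, i.e., every eigenvalue of M has absolute value at most 2·max of the spectral radii of S₁ and S₂. -/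
/-!
The change of basis `u x = X (x, 0) + X (x, 1)`, `w x = X (x, 0) - X (x, 1)` block-diagonalises
`M` as `2 S₁ ⊕ 2 S₂`: the symmetric part of an eigenvector for `μ` satisfies `2 S₁ u = μ u` and the
antisymmetric part satisfies `2 S₂ w = μ w`. One of them is nonzero, so `μ / 2` is an eigenvalue of
`S₁` or of `S₂`. Since a matrix has finitely many eigenvalues, the suprema defining the spectral
radii are over bounded sets, hence are genuine upper bounds.
-/

open Matrix

/-- The supremum of the absolute values of the eigenvalues is over a finite set, so it bounds each
of them. The eigenvalue is presented in the unscaled form `2 A Y = μ Y`. -/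
lemma abs_le_two_mul_sSup_abs_eigenvalues {V : Type*} [Fintype V] [DecidableEq V]
    (A : Matrix V V ℝ) (μ : ℝ) (Y : V → ℝ) (hY : Y ≠ 0)
    (h : ∀ x, 2 * A.mulVec Y x = μ * Y x) :
    |μ| ≤ 2 * sSup {x : ℝ | ∃ ν : ℝ, (∃ Y : V → ℝ, Y ≠ 0 ∧ A.mulVec Y = ν • Y) ∧ x = |ν|} := by
  have hfin : {x : ℝ | ∃ ν : ℝ, (∃ Y : V → ℝ, Y ≠ 0 ∧ A.mulVec Y = ν • Y) ∧ x = |ν|}.Finite := by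
    refine ((Module.End.finite_hasEigenvalue (Matrix.toLin' A)).image (fun ν => |ν|)).subset ?_
    rintro x ⟨ν, ⟨Z, hZ, hAZ⟩, rfl⟩
    refine ⟨ν, Module.End.hasEigenvalue_of_hasEigenvector (x := Z) ?_, rfl⟩
    exact Module.End.hasEigenvector_iff.2
      ⟨Module.End.mem_eigenspace_iff.2 (by rw [Matrix.toLin'_apply, hAZ]), hZ⟩
  have hle := le_csSup hfin.bddAbove (a := |μ / 2|) ⟨μ / 2, ⟨Y, hY, by
    ext x
    have := h x
    simp only [Pi.smul_apply, smul_eq_mul]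
    linarith⟩, rfl⟩
  rw [abs_div, abs_two] at hle
  linarith

/-- Let `G` be a finite simple graph whose edge set is partitioned into
the edge sets of two spanning subgraphs `H₁` and `H₂`, let `S₁` be the signed adjacency
matrix of a signing `σ₁` of `H₁` and `S₂` that of a signing `σ₂` of `H₂`. Let `M` be the
signed adjacency matrix on `V(G) × {0,1}` of the signing `σ` of `G ∘ K̄₂` given by
`M (x,i) (y,j) = (S₁)_{xy} + (−1)^{i+j} (S₂)_{xy}`. Then every eigenvalue of `M` has
absolute value at most `2 · max{ρ(H₁^{σ₁}), ρ(H₂^{σ₂})}`, where `ρ` denotes the spectral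
radius (supremum of absolute values of eigenvalues). -/
theorem lex_K2_signing_spectral_bound {V : Type*} [Fintype V] [DecidableEq V]
    (G H₁ H₂ : SimpleGraph V)
    (hdisj : ∀ u v : V, ¬ (H₁.Adj u v ∧ H₂.Adj u v))
    (hunion : ∀ u v : V, G.Adj u v ↔ H₁.Adj u v ∨ H₂.Adj u v)
    (S₁ : Matrix V V ℝ)
    (hS₁sym : S₁.IsSymm)
    (hS₁0 : ∀ u v : V, ¬ H₁.Adj u v → S₁ u v = 0)
    (hS₁1 : ∀ u v : V, H₁.Adj u v → S₁ u v = 1 ∨ S₁ u v = -1)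
    (S₂ : Matrix V V ℝ)
    (hS₂sym : S₂.IsSymm)
    (hS₂0 : ∀ u v : V, ¬ H₂.Adj u v → S₂ u v = 0)
    (hS₂1 : ∀ u v : V, H₂.Adj u v → S₂ u v = 1 ∨ S₂ u v = -1)
    (M : Matrix (V × Fin 2) (V × Fin 2) ℝ)
    (hM : ∀ (x y : V) (i j : Fin 2),
      M (x, i) (y, j) = S₁ x y + (-1 : ℝ) ^ ((i : ℕ) + (j : ℕ)) * S₂ x y) :
    ∀ (μ : ℝ) (X : V × Fin 2 → ℝ), X ≠ 0 → M.mulVec X = μ • X →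
      |μ| ≤ 2 * max
        (sSup {x : ℝ | ∃ ν : ℝ, (∃ Y : V → ℝ, Y ≠ 0 ∧ S₁.mulVec Y = ν • Y) ∧ x = |ν|})
        (sSup {x : ℝ | ∃ ν : ℝ, (∃ Y : V → ℝ, Y ≠ 0 ∧ S₂.mulVec Y = ν • Y) ∧ x = |ν|}) := by
  intro μ X hX hMX
  set u : V → ℝ := fun x => X (x, 0) + X (x, 1) with hu
  set w : V → ℝ := fun x => X (x, 0) - X (x, 1) with hw
  have h0 : ∀ x, S₁.mulVec u x + S₂.mulVec w x = μ * X (x, 0) := by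
    intro x
    have h := congrFun hMX (x, 0)
    simp only [Pi.smul_apply, smul_eq_mul] at h
    rw [← h]
    simp only [Matrix.mulVec, dotProduct, Fintype.sum_prod_type, Fin.sum_univ_two, hM, hu, hw,
      ← Finset.sum_add_distrib]
    refine Finset.sum_congr rfl fun y _ => ?_
    simp
    ring
  have h1 : ∀ x, S₁.mulVec u x - S₂.mulVec w x = μ * X (x, 1) := by
    intro x
    have h := congrFun hMX (x, 1)
    simp only [Pi.smul_apply, smul_eq_mul] at h
    rw [← h]
    simp only [Matrix.mulVec, dotProduct, Fintype.sum_prod_type, Fin.sum_univ_two, hM, hu, hw,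
      ← Finset.sum_sub_distrib]
    refine Finset.sum_congr rfl fun y _ => ?_
    simp
    ring
  by_cases hu0 : u = 0
  · have hw0 : w ≠ 0 := by
      intro hw0
      apply hX
      ext ⟨x, i⟩
      have a : X (x, 0) + X (x, 1) = 0 := congrFun hu0 x
      have b : X (x, 0) - X (x, 1) = 0 := congrFun hw0 x
      fin_cases i
      · change X (x, 0) = 0
        linarith
      · change X (x, 1) = 0
        linarith
    refine (abs_le_two_mul_sSup_abs_eigenvalues S₂ μ w hw0 fun x => ?_).trans
      (mul_le_mul_of_nonneg_left (le_max_right _ _) zero_le_two)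
    change _ = μ * (X (x, 0) - X (x, 1))
    linarith [h0 x, h1 x]
  · refine (abs_le_two_mul_sSup_abs_eigenvalues S₁ μ u hu0 fun x => ?_).trans
      (mul_le_mul_of_nonneg_left (le_max_left _ _) zero_le_two)
    change _ = μ * (X (x, 0) + X (x, 1))
    linarith [h0 x, h1 x]
end

section
/- Let G be a finite non-bipartite simple graph that decomposes into two spanning subgraphs H₁ and H₂ (edge-disjoint, with E(H₁) ∪ E(H₂) = E(G)) such that Δ(G) = 2Δ(H₁) = 2Δ(H₂). If there exist good signings for H₁ and for H₂ (i.e., signings σᵢ with ρ(Hᵢ^{σᵢ}) ≤ 2√(Δ(Hᵢ)−1)), then there exists a good signing for the lexicographic product G ∘ K̄₂, i.e., a signing σ with ρ((G ∘ K̄₂)^σ) ≤ 2√(Δ(G ∘ K̄₂)−1) = 2√(2Δ(G)−1). -/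
open Matrix

/-!
The `2 × 2` matrices `J = !![1, 1; 1, 1]` and `K = !![1, -1; -1, 1]` have all entries `±1`, satisfy
`J * K = K * J = 0`, and have nonzero eigenvalue `2` on the lines spanned by `(1, 1)` and `(1, -1)`
respectively. Since every edge of `G` lies in exactly one `Hᵢ`, the matrix
`M = S₁ ⊗ J + S₂ ⊗ K` is a signed adjacency matrix of `G ∘ K̄₂`, and in the basis
`(1, 1)`, `(1, -1)` of the second factor it is block diagonal with blocks `2 S₁` and `2 S₂`.
Hence `ρ(M) = 2 max (ρ(S₁), ρ(S₂)) ≤ 4 √(d - 1) ≤ 2 √(4 d - 1)`, where `d = Δ(H₁) = Δ(H₂)` and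
`Δ(G) = 2 d`.
-/

/-- The final estimate, with `d = Δ(Hᵢ)`; it also holds for `d = 0`, where both square roots take
the default value `0`. -/
lemma abs_le_of_abs_half_le {μ : ℝ} {D d : ℕ} (hD : D = 2 * d)
    (h : |μ / 2| ≤ 2 * Real.sqrt ((d : ℝ) - 1)) :
    |μ| ≤ 2 * Real.sqrt (2 * (D : ℝ) - 1) := by
  have h4 : 2 * Real.sqrt ((d : ℝ) - 1) = Real.sqrt (4 * ((d : ℝ) - 1)) := by
    rw [Real.sqrt_mul (by norm_num), show (4 : ℝ) = 2 ^ 2 by norm_num,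
      Real.sqrt_sq (by norm_num)]
  have hle : Real.sqrt (4 * ((d : ℝ) - 1)) ≤ Real.sqrt (2 * (D : ℝ) - 1) := by
    apply Real.sqrt_le_sqrt
    subst hD
    push_cast
    linarith
  rw [abs_div, abs_two] at h
  linarith

/-- Let `G` be a finite non-bipartite simple graph that decomposes into
two spanning subgraphs `H₁`, `H₂` (edge-disjoint, with `E(H₁) ∪ E(H₂) = E(G)`) such that
`Δ(G) = 2Δ(H₁) = 2Δ(H₂)`. If there exist good signings for `H₁` and `H₂` (signings `σᵢ`
with `ρ(Hᵢ^{σᵢ}) ≤ 2√(Δ(Hᵢ) − 1)`), then there exists a good signing for the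
lexicographic product `G ∘ K̄₂`: a signing `σ` (given by its signed adjacency matrix `M`
on `V(G) × {0,1}`, with `(x,i)` adjacent to `(y,j)` iff `G.Adj x y`) such that
`ρ((G ∘ K̄₂)^σ) ≤ 2√(Δ(G ∘ K̄₂) − 1) = 2√(2Δ(G) − 1)`. -/
theorem lex_K2_good_signing_of_decomposition {V : Type*} [Fintype V] [DecidableEq V]
    (G H₁ H₂ : SimpleGraph V)
    [DecidableRel G.Adj] [DecidableRel H₁.Adj] [DecidableRel H₂.Adj]
    (hnonbip : ¬ G.Colorable 2)
    (hdisj : ∀ u v : V, ¬ (H₁.Adj u v ∧ H₂.Adj u v))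
    (hunion : ∀ u v : V, G.Adj u v ↔ H₁.Adj u v ∨ H₂.Adj u v)
    (hΔ₁ : G.maxDegree = 2 * H₁.maxDegree)
    (hΔ₂ : G.maxDegree = 2 * H₂.maxDegree)
    (hσ₁ : ∃ S₁ : Matrix V V ℝ, S₁.IsSymm ∧
      (∀ u v : V, ¬ H₁.Adj u v → S₁ u v = 0) ∧
      (∀ u v : V, H₁.Adj u v → S₁ u v = 1 ∨ S₁ u v = -1) ∧
      (∀ (μ : ℝ) (X : V → ℝ), X ≠ 0 → S₁.mulVec X = μ • X →
        |μ| ≤ 2 * Real.sqrt ((H₁.maxDegree : ℝ) - 1)))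
    (hσ₂ : ∃ S₂ : Matrix V V ℝ, S₂.IsSymm ∧
      (∀ u v : V, ¬ H₂.Adj u v → S₂ u v = 0) ∧
      (∀ u v : V, H₂.Adj u v → S₂ u v = 1 ∨ S₂ u v = -1) ∧
      (∀ (μ : ℝ) (X : V → ℝ), X ≠ 0 → S₂.mulVec X = μ • X →
        |μ| ≤ 2 * Real.sqrt ((H₂.maxDegree : ℝ) - 1))) :
    ∃ M : Matrix (V × Fin 2) (V × Fin 2) ℝ, M.IsSymm ∧
      (∀ p q : V × Fin 2, ¬ G.Adj p.1 q.1 → M p q = 0) ∧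
      (∀ p q : V × Fin 2, G.Adj p.1 q.1 → M p q = 1 ∨ M p q = -1) ∧
      (∀ (μ : ℝ) (X : V × Fin 2 → ℝ), X ≠ 0 → M.mulVec X = μ • X →
        |μ| ≤ 2 * Real.sqrt (2 * (G.maxDegree : ℝ) - 1)) := by
  obtain ⟨S₁, hs₁, hz₁, hp₁, he₁⟩ := hσ₁
  obtain ⟨S₂, hs₂, hz₂, hp₂, he₂⟩ := hσ₂
  refine ⟨Matrix.of fun p q => S₁ p.1 q.1 + (if p.2 = q.2 then S₂ p.1 q.1 else - S₂ p.1 q.1),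
    ?_, ?_, ?_, ?_⟩
  · ext p q
    simp only [Matrix.transpose_apply, Matrix.of_apply, hs₁.apply p.1 q.1, hs₂.apply p.1 q.1,
      eq_comm (a := q.2)]
  · intro p q h
    rw [hunion, not_or] at h
    simp [hz₁ _ _ h.1, hz₂ _ _ h.2]
  · intro p q h
    rcases (hunion _ _).1 h with h1 | h2
    · have h2 := hz₂ _ _ fun h2 => hdisj _ _ ⟨h1, h2⟩
      simpa [h2] using hp₁ _ _ h1
    · have h1 := hz₁ _ _ fun h1 => hdisj _ _ ⟨h1, h2⟩
      rcases hp₂ _ _ h2 with h | h <;> by_cases hpq : p.2 = q.2 <;> simp [h1, h, hpq]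
  · intro μ X hX hμ
    have h0 : ∀ u, ∑ v, (S₁ u v * (X (v, 0) + X (v, 1)) + S₂ u v * (X (v, 0) - X (v, 1)))
        = μ * X (u, 0) := by
      intro u
      have := congrFun hμ (u, 0)
      simp only [Matrix.mulVec, dotProduct, Fintype.sum_prod_type, Fin.sum_univ_two,
        Matrix.of_apply, Pi.smul_apply, smul_eq_mul] at this
      rw [← this]
      refine Finset.sum_congr rfl fun v _ => ?_
      norm_num
      ring
    have h1 : ∀ u, ∑ v, (S₁ u v * (X (v, 0) + X (v, 1)) - S₂ u v * (X (v, 0) - X (v, 1)))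
        = μ * X (u, 1) := by
      intro u
      have := congrFun hμ (u, 1)
      simp only [Matrix.mulVec, dotProduct, Fintype.sum_prod_type, Fin.sum_univ_two,
        Matrix.of_apply, Pi.smul_apply, smul_eq_mul] at this
      rw [← this]
      refine Finset.sum_congr rfl fun v _ => ?_
      norm_num
      ring
    simp only [Finset.sum_add_distrib, Finset.sum_sub_distrib] at h0 h1
    -- The components of `X` along `(1, 1)` and `(1, -1)` cannot both vanish.
    by_cases hP : (fun v => X (v, 0) + X (v, 1)) = 0
    · have hQ : (fun v => X (v, 0) - X (v, 1)) ≠ 0 := by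
        intro hQ
        apply hX
        ext ⟨v, i⟩
        have a := congrFun hP v
        have b := congrFun hQ v
        simp only [Pi.zero_apply] at a b ⊢
        fin_cases i
        · change X (v, 0) = 0
          linarith
        · change X (v, 1) = 0
          linarith
      refine abs_le_of_abs_half_le hΔ₂ (he₂ (μ / 2) _ hQ ?_)
      ext u
      simp only [Matrix.mulVec, dotProduct, Pi.smul_apply, smul_eq_mul]
      linarith [h0 u, h1 u]
    · refine abs_le_of_abs_half_le hΔ₁ (he₁ (μ / 2) _ hP ?_)
      ext u
      simp only [Matrix.mulVec, dotProduct, Pi.smul_apply, smul_eq_mul]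
      linarith [h0 u, h1 u]
end

section
/- Let G be a finite non-bipartite d-regular simple graph (d even) that decomposes into two (d/2)-regular bipartite spanning subgraphs H₁ and H₂ (edge-disjoint, with E(H₁) ∪ E(H₂) = E(G)). Then the lexicographic product G ∘ K̄₂, which is 2d-regular, has a good signing, i.e., there is a signing σ with ρ((G ∘ K̄₂)^σ) ≤ 2√(2d−1). -/
open Matrix

/-!
Write `d = 2k`. With `J = [[1, 1], [1, 1]]` and `K = [[1, -1], [-1, 1]]`, and signings `B₁`, `B₂` of
`H₁`, `H₂`, the matrix `M = B₁ ⊗ J + B₂ ⊗ K` is a signing of `G ∘ K̄₂`. If `M X = μ X`, then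
`X(·, 0) + X(·, 1)` satisfies the eigenvalue equation of `B₁` at `μ / 2`, and `X(·, 0) - X(·, 1)` that
of `B₂`; one of these two vectors is nonzero. Hence it suffices that every bipartite `k`-regular graph
with `k ≥ 1` has a signing whose eigenvalues are at most `√(4k - 1) = √(2d - 1)` in absolute value
(`exists_signs_abs_eigenvalue_lt`). This is the theorem of Marcus, Spielman and Srivastava with a
slightly weaker bound, and it is proved along their lines.

* Interlacing (`exists_signs_pos`). Let `L i b` (`i ∈ S`, `b` a sign) be rank-one matrices `u uᵀ` and
  `B` symmetric. If the sum of `det (x I - B - ∑ i, L i (s i))` over all sign choices `s` is positive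
  for `x ≥ R`, then so is one of the summands. Signs are fixed one at a time. The step needs that for
  a rank-one `u uᵀ` the ratio of the averaged characteristic polynomials of `B + u uᵀ` and of `B` maps
  the upper half-plane into its closure, so that it is increasing on each real interval without
  poles. This in turn follows from the fact that the averaged determinant does not vanish at
  matrices `Z` with positive definite imaginary part (`sumDet_ne_zero`): it is affine in `t` along
  `Z - t u uᵀ`.
* Graphs. For `k`-regular `H` the matrix `A^s + k I` is the sum over the edges `pq` of the rank-one
  matrices `(e_p + s e_q) (e_p + s e_q)ᵀ`.
* Matching polynomial (`matchSum_rec`, `matchSum_pos_aux`). The average of `det (x I - A^s)` over all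
  signings satisfies the recursion of the matching polynomial under deletion of a vertex (Godsil and
  Gutman), which yields its positivity for `x ≥ √(4k - 1)` by the argument of Heilmann and Lieb.
* If `H` is bipartite, the spectrum of `A^s` is symmetric about `0`, so bounding the largest eigenvalue
  is enough.
-/

set_option linter.unusedSectionVars false

/-! ### Matrices with positive definite imaginary part -/

/-- The imaginary part of the quadratic form `x ↦ x* Z x` is positive definite. -/
def IsDissipative {V : Type*} [Fintype V] (Z : Matrix V V ℂ) : Prop :=
  ∀ x : V → ℂ, x ≠ 0 → 0 < (star x ⬝ᵥ Z *ᵥ x).im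

theorem IsDissipative.det_ne_zero {V : Type*} [Fintype V] [DecidableEq V]
    {Z : Matrix V V ℂ} (hZ : IsDissipative Z) : Z.det ≠ 0 := by
  intro h
  obtain ⟨x, hx, hx0⟩ := Matrix.exists_mulVec_eq_zero_iff.mpr h
  have := hZ x hx
  simp [hx0] at this

/-- The real rank-one matrix `u uᵀ`, viewed as a complex matrix. -/
def rankOne {V : Type*} (u : V → ℝ) : Matrix V V ℂ := (vecMulVec u u).map Complex.ofReal

theorem star_dotProduct_rankOne {V : Type*} [Fintype V] (u : V → ℝ) (x : V → ℂ) :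
    star x ⬝ᵥ rankOne u *ᵥ x = ((‖∑ i, (u i : ℂ) * x i‖ ^ 2 : ℝ) : ℂ) := by
  have h1 : rankOne u *ᵥ x = fun i => (u i : ℂ) * ∑ j, (u j : ℂ) * x j := by
    ext i
    simp [rankOne, mulVec, dotProduct, vecMulVec_apply, Finset.mul_sum, mul_assoc]
  rw [h1, Complex.ofReal_pow, ← Complex.conj_mul']
  simp only [dotProduct, map_sum, map_mul, Complex.conj_ofReal, Finset.sum_mul, Pi.star_apply,
    RCLike.star_def]
  exact Finset.sum_congr rfl fun i _ => by ring

/-- Subtracting `t u uᵀ` adds `-Im t |u ⬝ x|² ≥ 0` to the imaginary part of the quadratic form. -/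
theorem IsDissipative.sub_smul_rankOne {V : Type*} [Fintype V] {Z : Matrix V V ℂ}
    (hZ : IsDissipative Z) (u : V → ℝ) {t : ℂ} (ht : t.im ≤ 0) :
    IsDissipative (Z - t • rankOne u) := by
  intro x hx
  rw [sub_mulVec, smul_mulVec, dotProduct_sub, dotProduct_smul, star_dotProduct_rankOne,
    smul_eq_mul, Complex.sub_im, Complex.im_mul_ofReal]
  have := hZ x hx
  nlinarith [sq_nonneg ‖∑ i, (u i : ℂ) * x i‖]

theorem IsDissipative.sub_rankOne {V : Type*} [Fintype V] {Z : Matrix V V ℂ}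
    (hZ : IsDissipative Z) (u : V → ℝ) : IsDissipative (Z - rankOne u) := by
  simpa using hZ.sub_smul_rankOne u (t := 1) (by simp)

theorem isDissipative_scalar_sub {V : Type*} [Fintype V] [DecidableEq V] {B : Matrix V V ℝ}
    (hB : B.IsSymm) {z : ℂ} (hz : 0 < z.im) :
    IsDissipative (Matrix.scalar V z - B.map Complex.ofReal) := by
  intro x hx
  have h1 : (star x ⬝ᵥ (B.map Complex.ofReal) *ᵥ x).im = 0 := by
    rw [← Complex.conj_eq_iff_im]
    simp only [dotProduct, mulVec, map_sum, map_mul, Finset.mul_sum, Pi.star_apply,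
      RCLike.star_def, Complex.conj_conj, map_apply, Complex.conj_ofReal]
    rw [Finset.sum_comm]
    refine Finset.sum_congr rfl fun i _ => Finset.sum_congr rfl fun j _ => ?_
    rw [hB.apply i j]
    ring
  have h2 : star x ⬝ᵥ (Matrix.scalar V z) *ᵥ x = z * ((∑ i, ‖x i‖ ^ 2 : ℝ) : ℂ) := by
    have : (Matrix.scalar V z) *ᵥ x = fun i => z * x i := by
      ext i; simp [mulVec_diagonal]
    rw [this]
    push_cast
    simp only [dotProduct, Finset.mul_sum, Pi.star_apply, RCLike.star_def, ← Complex.conj_mul']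
    exact Finset.sum_congr rfl fun i _ => by ring
  rw [sub_mulVec, dotProduct_sub, Complex.sub_im, h1, h2, Complex.im_mul_ofReal, sub_zero]
  refine mul_pos hz ?_
  obtain ⟨i, hi⟩ := Function.ne_iff.mp hx
  exact Finset.sum_pos' (fun _ _ => by positivity)
    ⟨i, Finset.mem_univ _, by have := norm_pos_iff.mpr hi; positivity⟩

/-- Along a rank-one direction the determinant is affine: at `t` it is the interpolation of its
values at `0` and `1`. -/
theorem det_sub_smul_rankOne {V : Type*} [Fintype V] [DecidableEq V] {Z : Matrix V V ℂ}
    (hZ : Z.det ≠ 0) (u : V → ℝ) (t : ℂ) :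
    (Z - t • rankOne u).det = Z.det - t * (Z.det - (Z - rankOne u).det) := by
  have key : ∀ t : ℂ, (Z - t • rankOne u).det =
      Z.det * (1 - t * (replicateRow Unit (fun i => (u i : ℂ)) * Z⁻¹ *
        replicateCol Unit (fun i => (u i : ℂ))) () ()) := by
    intro t
    have h1 : Z - t • rankOne u = Z + replicateCol Unit (fun i => -t * (u i : ℂ)) *
        replicateRow Unit (fun i => (u i : ℂ)) := by
      ext i j
      simp [rankOne, vecMulVec_apply, Matrix.mul_apply]
      ring
    have h2 : replicateCol Unit (fun i => -t * (u i : ℂ)) =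
        (-t) • replicateCol Unit (fun i => (u i : ℂ)) := by ext; simp
    rw [h1, det_add_replicateCol_mul_replicateRow (isUnit_iff_ne_zero.mpr hZ), h2]
    simp [sub_eq_add_neg]
  have k1 := key 1
  rw [one_smul] at k1
  rw [key t, k1]
  ring

/-! ### Sums of determinants over all sign choices -/

section
variable {ι V : Type*} [Fintype ι] [DecidableEq ι] [Fintype V] [DecidableEq V]

/-- The sum over all sign choices `s` of `det (Z - ∑ i ∈ S, L i (s i))`. Signs at indices outside `S`
only contribute a power of two; summing over them as well keeps the index type independent of `S`. -/
def sumDet (L : ι → Bool → Matrix V V ℝ) (S : Finset ι) (Z : Matrix V V ℂ) : ℂ :=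
  ∑ s : ι → Bool, (Z - ∑ i ∈ S, (L i (s i)).map Complex.ofReal).det

/-- Summing out the sign at `a`: if `F b s` does not depend on `s a`, flipping that sign pairs the
summands with `b = true` and those with `b = false`. -/
theorem two_mul_sum_bool {M : Type*} [Ring M] (a : ι) (F : Bool → (ι → Bool) → M)
    (hF : ∀ b s c, F b (Function.update s a c) = F b s) :
    2 * ∑ s : ι → Bool, F (s a) s = ∑ s, F true s + ∑ s, F false s := by
  let φ : (ι → Bool) → (ι → Bool) := fun s => Function.update s a (!s a)
  have hφ : Function.Involutive φ := fun s => by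
    simp [φ]
  have h1 : ∑ s, F (s a) s = ∑ s, F (!s a) s := by
    rw [← Equiv.sum_comp (hφ.toPerm φ)]
    refine Finset.sum_congr rfl fun s _ => ?_
    simp [φ, hF]
  rw [two_mul]
  nth_rewrite 2 [h1]
  rw [← Finset.sum_add_distrib, ← Finset.sum_add_distrib]
  refine Finset.sum_congr rfl fun s _ => ?_
  cases s a <;> simp [add_comm]

theorem sum_insert_update {M : Type*} [AddCommMonoid M] (L : ι → Bool → M) {S : Finset ι} {a : ι}
    (ha : a ∉ S) (s : ι → Bool) (b : Bool) :
    ∑ i ∈ S, L i (Function.update s a b i) = ∑ i ∈ S, L i (s i) :=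
  Finset.sum_congr rfl fun i hi => by
    rw [Function.update_of_ne (ne_of_mem_of_not_mem hi ha)]

theorem two_mul_sumDet_insert (L : ι → Bool → Matrix V V ℝ) {S : Finset ι} {a : ι} (ha : a ∉ S)
    (Z : Matrix V V ℂ) :
    2 * sumDet L (insert a S) Z = sumDet L S (Z - (L a true).map Complex.ofReal)
      + sumDet L S (Z - (L a false).map Complex.ofReal) := by
  have := two_mul_sum_bool a (fun b s => (Z - (L a b).map Complex.ofReal -
    ∑ i ∈ S, (L i (s i)).map Complex.ofReal).det) (fun b s c => by
      rw [sum_insert_update (fun i b => (L i b).map Complex.ofReal) ha])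
  simpa only [sumDet, Finset.sum_insert ha, sub_sub] using this

theorem IsDissipative.sub_sum {L : ι → Bool → Matrix V V ℝ} {S : Finset ι}
    (hL : ∀ i ∈ S, ∀ b, ∃ u, L i b = vecMulVec u u) (s : ι → Bool)
    {Z : Matrix V V ℂ} (hZ : IsDissipative Z) :
    IsDissipative (Z - ∑ i ∈ S, (L i (s i)).map Complex.ofReal) := by
  induction S using Finset.induction_on generalizing Z with
  | empty => simpa using hZ
  | insert a S ha ih =>
    rw [Finset.sum_insert ha, ← sub_sub]
    obtain ⟨u, hu⟩ := hL a (Finset.mem_insert_self _ _) (s a)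
    refine ih (fun i hi => hL i (Finset.mem_insert_of_mem hi)) ?_
    rw [hu]
    exact hZ.sub_rankOne u

theorem sumDet_sub_smul {L : ι → Bool → Matrix V V ℝ} {S : Finset ι}
    (hL : ∀ i ∈ S, ∀ b, ∃ u, L i b = vecMulVec u u) (u : V → ℝ) (t : ℂ)
    {Z : Matrix V V ℂ} (hZ : IsDissipative Z) :
    sumDet L S (Z - t • rankOne u) =
      sumDet L S Z - t * (sumDet L S Z - sumDet L S (Z - rankOne u)) := by
  simp only [sumDet]
  rw [← Finset.sum_sub_distrib, Finset.mul_sum, ← Finset.sum_sub_distrib]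
  refine Finset.sum_congr rfl fun s _ => ?_
  rw [sub_right_comm, det_sub_smul_rankOne (hZ.sub_sum hL s).det_ne_zero, sub_right_comm]

/-- The averaged determinant at `Z - u uᵀ` divided by the one at `Z` lies in the open upper
half-plane or equals `1`. Call the ratio `w`; the averaged determinant at `Z - t u uᵀ` is proportional
to `1 - t (1 - w)`, which cannot vanish for `Im t ≤ 0`. -/
theorem im_ratio {L : ι → Bool → Matrix V V ℝ} {S : Finset ι}
    (hL : ∀ i ∈ S, ∀ b, ∃ u, L i b = vecMulVec u u)
    (hne : ∀ Z, IsDissipative Z → sumDet L S Z ≠ 0)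
    (u : V → ℝ) {Z : Matrix V V ℂ} (hZ : IsDissipative Z) :
    sumDet L S (Z - rankOne u) / sumDet L S Z = 1 ∨
      0 < (sumDet L S (Z - rankOne u) / sumDet L S Z).im := by
  by_contra! hcon
  obtain ⟨h1, h2⟩ := hcon
  set w := sumDet L S (Z - rankOne u) / sumDet L S Z with hw
  have hg : 1 - w ≠ 0 := sub_ne_zero.mpr (Ne.symm h1)
  have h0 := hne Z hZ
  have ht : ((1 - w)⁻¹).im ≤ 0 := by
    rw [Complex.inv_im]
    apply div_nonpos_of_nonpos_of_nonneg _ (Complex.normSq_nonneg _)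
    simpa using h2
  apply hne _ (hZ.sub_smul_rankOne u ht)
  rw [sumDet_sub_smul hL u _ hZ]
  have : sumDet L S Z - sumDet L S (Z - rankOne u) = (1 - w) * sumDet L S Z := by
    rw [hw]; field_simp
  rw [this, inv_mul_cancel_left₀ hg, sub_self]

/-- The averaged determinant has no zero among dissipative matrices: the two ratios of `im_ratio`
that enter when an index is added cannot sum to zero. -/
theorem sumDet_ne_zero {L : ι → Bool → Matrix V V ℝ} {S : Finset ι}
    (hL : ∀ i ∈ S, ∀ b, ∃ u, L i b = vecMulVec u u) :
    ∀ Z, IsDissipative Z → sumDet L S Z ≠ 0 := by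
  induction S using Finset.induction_on with
  | empty =>
    intro Z hZ
    simpa [sumDet] using hZ.det_ne_zero
  | insert a S ha ih =>
    intro Z hZ h
    have hL' : ∀ i ∈ S, ∀ b, ∃ u, L i b = vecMulVec u u :=
      fun i hi => hL i (Finset.mem_insert_of_mem hi)
    have hne := ih hL'
    have h2 := two_mul_sumDet_insert L ha Z
    obtain ⟨u, hu⟩ := hL a (Finset.mem_insert_self _ _) true
    obtain ⟨v, hv⟩ := hL a (Finset.mem_insert_self _ _) false
    have e1 := im_ratio hL' hne u hZ
    have e2 := im_ratio hL' hne v hZ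
    rw [h, mul_zero, hu, hv] at h2
    have h3 : sumDet L S (Z - rankOne u) / sumDet L S Z +
        sumDet L S (Z - rankOne v) / sumDet L S Z = 0 := by
      rw [← add_div, rankOne, rankOne, ← h2, zero_div]
    have h4 := congrArg Complex.im h3
    rw [Complex.add_im, Complex.zero_im] at h4
    rcases e1 with e1 | e1 <;> rcases e2 with e2 | e2
    · rw [e1, e2] at h3; norm_num at h3
    · rw [e1, Complex.one_im] at h4; linarith
    · rw [e2, Complex.one_im] at h4; linarith
    · linarith
end
/-! ### Ratios of real polynomials preserving the upper half-plane -/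

open Polynomial in
/-- If `h / f` maps the upper half-plane into its closure, then it is increasing on every real
interval without zeros of `f`: its derivative at a real `x` is the limit of
`Im ((h / f) (x + iε)) / ε` as `ε → 0⁺`. -/
theorem monotoneOn_ratio {f h : ℝ[X]}
    (hIm : ∀ z : ℂ, 0 < z.im → 0 ≤ (aeval z h / aeval z f).im)
    {D : Set ℝ} (hD : Convex ℝ D) (hf : ∀ x ∈ D, f.eval x ≠ 0) :
    MonotoneOn (fun x => h.eval x / f.eval x) D := by
  have hderiv : ∀ x ∈ D, HasDerivAt (fun x => h.eval x / f.eval x)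
      ((h.derivative.eval x * f.eval x - h.eval x * f.derivative.eval x) / f.eval x ^ 2) x :=
    fun x hx => (h.hasDerivAt x).div (f.hasDerivAt x) (hf x hx)
  refine monotoneOn_of_hasDerivWithinAt_nonneg hD
    (fun x hx => (hderiv x hx).continuousAt.continuousWithinAt)
    (fun x hx => (hderiv x (interior_subset hx)).hasDerivWithinAt) (fun x hx => ?_)
  replace hx := interior_subset hx
  set d := (h.derivative.eval x * f.eval x - h.eval x * f.derivative.eval x) / f.eval x ^ 2 with hd
  have ev : ∀ p : ℝ[X], aeval (x : ℂ) p = ((p.eval x : ℝ) : ℂ) := fun p => by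
    simpa using Polynomial.aeval_algebraMap_apply_eq_algebraMap_eval (A := ℂ) x p
  have hfx : aeval (x : ℂ) f ≠ 0 := by
    rw [ev]; exact_mod_cast hf x hx
  have h1 : HasDerivAt (fun z : ℂ => aeval z h / aeval z f) (d : ℂ) x := by
    have := (h.hasDerivAt_aeval (x : ℂ)).div (f.hasDerivAt_aeval (x : ℂ)) hfx
    simp only [ev] at this
    exact this.congr_deriv (by rw [hd]; push_cast; rfl)
  have hl : HasDerivAt (fun ε : ℝ => (x : ℂ) + ε * Complex.I) Complex.I 0 := by
    simpa using ((Complex.ofRealCLM.hasDerivAt (x := (0 : ℝ))).mul_const Complex.I).const_add (x : ℂ)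
  have h2 : HasDerivAt (fun ε : ℝ => (aeval ((x : ℂ) + ε * Complex.I) h /
      aeval ((x : ℂ) + ε * Complex.I) f)) (d * Complex.I) 0 := by
    have h1' : HasDerivAt (fun z : ℂ => aeval z h / aeval z f) (d : ℂ)
      ((x : ℂ) + (0 : ℝ) * Complex.I) := by simpa using h1
    exact h1'.comp (0 : ℝ) hl
  have h3 : HasDerivAt (fun ε : ℝ => (aeval ((x : ℂ) + ε * Complex.I) h /
      aeval ((x : ℂ) + ε * Complex.I) f).im) d 0 := by
    have := Complex.imCLM.hasFDerivAt.comp_hasDerivAt (0 : ℝ) h2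
    simpa [Function.comp_def] using this
  have h4 := (hasDerivAt_iff_tendsto_slope.mp h3).mono_left
    (nhdsWithin_mono (0 : ℝ) (t := {0}ᶜ) (s := Set.Ioi 0) (fun y hy => ne_of_gt hy))
  refine ge_of_tendsto h4 ?_
  filter_upwards [self_mem_nhdsWithin] with ε hε
  have hε : 0 < ε := hε
  have e0 : (aeval ((x : ℂ) + ((0 : ℝ) : ℂ) * Complex.I) h /
      aeval ((x : ℂ) + ((0 : ℝ) : ℂ) * Complex.I) f).im = 0 := by
    rw [Complex.ofReal_zero, zero_mul, add_zero, ev, ev, ← Complex.ofReal_div, Complex.ofReal_im]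
  rw [slope_def_field, e0, sub_zero, sub_zero]
  exact div_nonneg (hIm _ (by simpa using hε)) hε.le

open Polynomial in
/-- Beyond the largest zero of `f`, the ratio `h / f` increases to its limit `1`. -/
theorem le_of_ratio {f h : ℝ[X]} (hdeg : h.degree = f.degree)
    (hlead : h.leadingCoeff = f.leadingCoeff) (hf0 : f ≠ 0)
    (hIm : ∀ z : ℂ, 0 < z.im → 0 ≤ (aeval z h / aeval z f).im)
    {x₀ : ℝ} (hf : ∀ x, x₀ < x → 0 < f.eval x) {x : ℝ} (hx : x₀ < x) :
    h.eval x ≤ f.eval x := by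
  have hm := monotoneOn_ratio hIm (convex_Ioi x₀) (fun x hx => (hf x hx).ne')
  have ht := Polynomial.div_tendsto_atTop_leadingCoeff_div_of_degree_eq h f hdeg
  rw [hlead, div_self (leadingCoeff_ne_zero.mpr hf0)] at ht
  have : h.eval x / f.eval x ≤ 1 := by
    refine ge_of_tendsto ht ?_
    filter_upwards [Filter.eventually_ge_atTop x] with y hy
    exact hm hx (lt_of_lt_of_le hx hy) hy
  exact (div_le_one (hf x hx)).mp this

open Polynomial in
/-- If `h true + h false` is positive on `[R, ∞)`, so is one of the two summands. A zero of `f` in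
`[R, ∞)` is impossible, as both `h b ≤ f = 0` at the largest one; and then `h b / f` is increasing on
`[R, ∞)`, so the sign of `h b` at `R` decides. -/
theorem exists_pos_of_sum_pos {f : ℝ[X]} {h : Bool → ℝ[X]} (hdeg : ∀ b, (h b).degree = f.degree)
    (hlead : ∀ b, (h b).leadingCoeff = f.leadingCoeff) (hf0 : 0 < f.leadingCoeff)
    (hIm : ∀ b, ∀ z : ℂ, 0 < z.im → 0 ≤ (aeval z (h b) / aeval z f).im)
    {R : ℝ} (hR : ∀ x, R ≤ x → 0 < (h true).eval x + (h false).eval x) :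
    ∃ b, ∀ x, R ≤ x → 0 < (h b).eval x := by
  have hne : f ≠ 0 := leadingCoeff_ne_zero.mp hf0.ne'
  have hpos : ∀ x, R ≤ x → 0 < f.eval x := by
    by_contra! hcon
    obtain ⟨y, hyR, hy⟩ := hcon
    have hev : ∀ᶠ x in Filter.atTop, 0 < f.eval x := by
      by_cases h0 : 0 < f.degree
      · exact (f.tendsto_atTop_of_leadingCoeff_nonneg h0 hf0.le).eventually_gt_atTop 0
      · rw [eq_C_of_degree_le_zero (not_lt.mp h0), leadingCoeff_C] at hf0
        rw [eq_C_of_degree_le_zero (not_lt.mp h0)]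
        exact Filter.Eventually.of_forall fun x => by rwa [eval_C]
    have hroot : ∃ x, R ≤ x ∧ f.eval x = 0 := by
      obtain ⟨w, hw, hyw⟩ := (hev.and (Filter.eventually_ge_atTop y)).exists
      obtain ⟨x, hx, hx0⟩ := intermediate_value_Icc hyw f.continuous.continuousOn ⟨hy, hw.le⟩
      exact ⟨x, hyR.trans hx.1, hx0⟩
    obtain ⟨r, hrR, hr0⟩ := hroot
    have hrm : r ∈ f.roots.toFinset := by simp [hne, hr0]
    let x₀ := f.roots.toFinset.max' ⟨r, hrm⟩
    have hx₀ : f.eval x₀ = 0 := by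
      have := f.roots.toFinset.max'_mem ⟨r, hrm⟩
      simp only [Multiset.mem_toFinset, mem_roots', IsRoot.def] at this
      exact this.2
    have hx₀R : R ≤ x₀ := hrR.trans (f.roots.toFinset.le_max' r hrm)
    have habove : ∀ x, x₀ < x → 0 < f.eval x := by
      intro x hx
      by_contra! hneg
      obtain ⟨w, hw, hyw⟩ := (hev.and (Filter.eventually_ge_atTop x)).exists
      obtain ⟨t, ht, ht0⟩ := intermediate_value_Icc hyw f.continuous.continuousOn ⟨hneg, hw.le⟩
      have htm : t ∈ f.roots.toFinset := by simp only [Multiset.mem_toFinset, mem_roots', IsRoot.def]; exact ⟨hne, ht0⟩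
      have := f.roots.toFinset.le_max' t htm
      exact absurd (hx.trans_le ht.1) (not_lt.mpr this)
    have hle : ∀ b, (h b).eval x₀ ≤ 0 := by
      intro b
      rw [← hx₀]
      have hc : ∀ p : ℝ[X], Filter.Tendsto (fun x => p.eval x) (nhdsWithin x₀ (Set.Ioi x₀))
          (nhds (p.eval x₀)) := fun p => p.continuous.continuousWithinAt
      refine le_of_tendsto_of_tendsto (hc (h b)) (hc f) ?_
      filter_upwards [self_mem_nhdsWithin] with x hx
      exact le_of_ratio (hdeg b) (hlead b) hne (hIm b) habove hx
    have := hR x₀ hx₀R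
    linarith [hle true, hle false]
  have key : ∀ b, 0 < (h b).eval R → ∀ x, R ≤ x → 0 < (h b).eval x := by
    intro b hb x hx
    have hm := monotoneOn_ratio (hIm b) (convex_Ici R) (fun x hx => (hpos x hx).ne')
      (Set.mem_Ici.mpr le_rfl) (Set.mem_Ici.mpr hx) hx
    have h1 : 0 < (h b).eval R / f.eval R := div_pos hb (hpos R le_rfl)
    have h2 := h1.trans_le hm
    rwa [div_pos_iff_of_pos_right (hpos x hx)] at h2
  by_cases ht : 0 < (h true).eval R
  · exact ⟨true, key true ht⟩
  · refine ⟨false, key false ?_⟩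
    have := hR R le_rfl
    linarith
/-! ### Choosing the signs one at a time -/

section
open Polynomial
variable {ι V : Type*} [Fintype ι] [DecidableEq ι] [Fintype V] [DecidableEq V]

/-- The sum over all sign choices `s` of the characteristic polynomial of `B + ∑ i ∈ S, L i (s i)`; the
real polynomial whose values at complex `z` are those of `sumDet` at `z I - B`. -/
noncomputable def sumPoly (L : ι → Bool → Matrix V V ℝ) (S : Finset ι) (B : Matrix V V ℝ) : ℝ[X] :=
  ∑ s : ι → Bool, (B + ∑ i ∈ S, L i (s i)).charpoly

theorem eval_sumPoly (L : ι → Bool → Matrix V V ℝ) (S : Finset ι) (B : Matrix V V ℝ) (x : ℝ) :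
    (sumPoly L S B).eval x = ∑ s : ι → Bool, (Matrix.scalar V x - (B + ∑ i ∈ S, L i (s i))).det := by
  simp only [sumPoly, eval_finsetSum, eval_charpoly]

theorem aeval_sumPoly (L : ι → Bool → Matrix V V ℝ) (S : Finset ι) (B : Matrix V V ℝ) (z : ℂ) :
    aeval z (sumPoly L S B) = sumDet L S (Matrix.scalar V z - B.map Complex.ofReal) := by
  simp only [sumPoly, sumDet, map_sum]
  refine Finset.sum_congr rfl fun s _ => ?_
  rw [← eval_map_algebraMap, ← charpoly_map, eval_charpoly, sub_sub]
  congr 2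
  ext i j
  simp [Matrix.sum_apply]

theorem coeff_sumPoly (L : ι → Bool → Matrix V V ℝ) (S : Finset ι) (B : Matrix V V ℝ) :
    (sumPoly L S B).coeff (Fintype.card V) = Fintype.card (ι → Bool) := by
  have : ∀ M : Matrix V V ℝ, M.charpoly.coeff (Fintype.card V) = 1 := fun M => by
    rw [← charpoly_natDegree_eq_dim M]; exact M.charpoly_monic
  simp [sumPoly, this]

theorem degree_sumPoly (L : ι → Bool → Matrix V V ℝ) (S : Finset ι) (B : Matrix V V ℝ) :
    (sumPoly L S B).degree = Fintype.card V := by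
  refine degree_eq_of_le_of_coeff_ne_zero ?_ ?_
  · exact (degree_sum_le _ _).trans (Finset.sup_le fun s _ => (charpoly_degree_eq_dim _).le)
  · rw [coeff_sumPoly]; exact_mod_cast Fintype.card_ne_zero

theorem leadingCoeff_sumPoly (L : ι → Bool → Matrix V V ℝ) (S : Finset ι) (B : Matrix V V ℝ) :
    (sumPoly L S B).leadingCoeff = Fintype.card (ι → Bool) := by
  rw [leadingCoeff, natDegree_eq_of_degree_eq_some (degree_sumPoly L S B), coeff_sumPoly]

theorem two_mul_eval_sumPoly_insert (L : ι → Bool → Matrix V V ℝ) {S : Finset ι} {a : ι}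
    (ha : a ∉ S) (B : Matrix V V ℝ) (x : ℝ) :
    2 * (sumPoly L (insert a S) B).eval x =
      (sumPoly L S (B + L a true)).eval x + (sumPoly L S (B + L a false)).eval x := by
  have := two_mul_sum_bool a (fun b s => (Matrix.scalar V x - (B + L a b +
    ∑ i ∈ S, L i (s i))).det) (fun b s c => by rw [sum_insert_update L ha])
  simpa only [eval_sumPoly, Finset.sum_insert ha, add_assoc] using this

/-- Some summand of an averaged characteristic polynomial has all its real zeros below `R`, if the
average does. -/
theorem exists_signs_pos {L : ι → Bool → Matrix V V ℝ} {S : Finset ι}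
    (hL : ∀ i ∈ S, ∀ b, ∃ u, L i b = vecMulVec u u) {R : ℝ} {B : Matrix V V ℝ} (hB : B.IsSymm)
    (hpos : ∀ x, R ≤ x → 0 < (sumPoly L S B).eval x) :
    ∃ s : ι → Bool, ∀ x, R ≤ x → 0 < (Matrix.scalar V x - (B + ∑ i ∈ S, L i (s i))).det := by
  induction S using Finset.induction_on generalizing B with
  | empty =>
    refine ⟨fun _ => true, fun x hx => ?_⟩
    have := hpos x hx
    rw [eval_sumPoly] at this
    simp only [Finset.sum_empty, Finset.sum_const] at this ⊢
    exact pos_of_smul_pos_left this (by positivity)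
  | insert a S ha ih =>
    have hL' : ∀ i ∈ S, ∀ b, ∃ u, L i b = vecMulVec u u :=
      fun i hi => hL i (Finset.mem_insert_of_mem hi)
    obtain ⟨b, hb⟩ := exists_pos_of_sum_pos (f := sumPoly L S B)
      (h := fun b => sumPoly L S (B + L a b)) (R := R)
      (fun b => by rw [degree_sumPoly, degree_sumPoly])
      (fun b => by rw [leadingCoeff_sumPoly, leadingCoeff_sumPoly])
      (by rw [leadingCoeff_sumPoly]; exact_mod_cast Fintype.card_pos)
      (fun b z hz => by
        obtain ⟨u, hu⟩ := hL a (Finset.mem_insert_self _ _) b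
        have e : Matrix.scalar V z - (B + L a b).map Complex.ofReal =
            Matrix.scalar V z - B.map Complex.ofReal - rankOne u := by
          rw [hu, rankOne, sub_sub]
          congr 1
          ext i j
          simp
        rw [aeval_sumPoly, aeval_sumPoly, e]
        rcases im_ratio hL' (sumDet_ne_zero hL') u (isDissipative_scalar_sub hB hz) with h | h
        · rw [h]; simp
        · exact h.le)
      (fun x hx => by
        rw [← two_mul_eval_sumPoly_insert L ha]
        linarith [hpos x hx])
    obtain ⟨u, hu⟩ := hL a (Finset.mem_insert_self _ _) b
    have hsymm : (B + L a b).IsSymm := by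
      refine hB.add ?_
      rw [hu, Matrix.IsSymm, transpose_vecMulVec]
    obtain ⟨s, hs⟩ := ih hL' hsymm hb
    refine ⟨Function.update s a b, fun x hx => ?_⟩
    rw [Finset.sum_insert ha, sum_insert_update L ha, Function.update_self, ← add_assoc]
    exact hs x hx
end
/-! ### The average over all signings and the matching polynomial -/

section
variable {V : Type*} [Fintype V] [DecidableEq V]

/-- The sign `1` or `-1` encoded by a Boolean. -/
def boolSign (b : Bool) : ℝ := if b then 1 else -1

theorem boolSign_not (b : Bool) : boolSign (!b) = -boolSign b := by cases b <;> simp [boolSign]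
theorem boolSign_mul_self (b : Bool) : boolSign b * boolSign b = 1 := by
  cases b <;> simp [boolSign]

theorem det_eq_sum_updateRow (A : Matrix V V ℝ) (v : V) :
    A.det = ∑ u, A v u * (A.updateRow v (Pi.single u 1)).det := by
  have := congrFun (congrFun (Matrix.mul_adjugate A) v) v
  simpa [Matrix.mul_apply, Matrix.adjugate_apply] using this.symm

theorem det_eq_sum_updateCol (A : Matrix V V ℝ) (v : V) :
    A.det = ∑ w, A w v * (A.updateCol v (Pi.single w 1)).det := by
  have := det_eq_sum_updateRow Aᵀ v
  simpa only [det_transpose, updateRow_transpose, transpose_apply] using this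

/-- If row `v` is the unit vector `e_v`, column `v` may be cleared as well. -/
theorem det_updateCol_of_row {A : Matrix V V ℝ} {v : V} (hA : ∀ j, A v j = if j = v then 1 else 0) :
    (A.updateCol v (Pi.single v 1)).det = A.det := by
  rw [det_eq_sum_updateCol A v, Finset.sum_eq_single v]
  · simp [hA]
  · intro w _ hw
    have : (A.updateCol v (Pi.single w 1)).det = 0 := by
      refine det_eq_zero_of_row_eq_zero v fun j => ?_
      by_cases hj : j = v
      · subst hj; simp [Ne.symm hw]
      · simp [hj, hA]
    rw [this, mul_zero]
  · simp

theorem det_updateRow_of_col {A : Matrix V V ℝ} {v : V} (hA : ∀ i, A i v = if i = v then 1 else 0) :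
    (A.updateRow v (Pi.single v 1)).det = A.det := by
  have := det_updateCol_of_row (A := Aᵀ) (v := v) hA
  rwa [updateCol_transpose, det_transpose, det_transpose] at this

variable (H : SimpleGraph V) [DecidableRel H.Adj]

/-- The matrix `x I - A^s` on the vertices in `W`, extended by the identity outside `W`. Its
determinant is that of the principal submatrix on `W`. -/
def subMat (x : ℝ) (W : Finset V) (s : Sym2 V → Bool) : Matrix V V ℝ :=
  Matrix.of fun i j => if i ∈ W ∧ j ∈ W then
    (if i = j then x else if H.Adj i j then -boolSign (s s(i, j)) else 0)
    else if i = j then 1 else 0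

theorem subMat_apply (x : ℝ) (W : Finset V) (s : Sym2 V → Bool) (i j : V) :
  subMat H x W s i j = if i ∈ W ∧ j ∈ W then
    (if i = j then x else if H.Adj i j then -boolSign (s s(i, j)) else 0)
    else if i = j then 1 else 0 := rfl

/-- The sum over all sign functions `s` of the characteristic polynomial at `x` of the signed adjacency
matrix on `W`; up to a power of two, the matching polynomial of the subgraph induced on `W`. -/
def matchSum (x : ℝ) (W : Finset V) : ℝ := ∑ s, (subMat H x W s).det

/-- `subMat` with row `v` replaced by `e_u` and then column `v` by `e_w`: up to sign, for `u, w ≠ v`, its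
determinant is the minor deleting rows `v, w` and columns `v, u`. -/
def minorMat (x : ℝ) (W : Finset V) (v u w : V) (s : Sym2 V → Bool) : Matrix V V ℝ :=
  ((subMat H x W s).updateRow v (Pi.single u 1)).updateCol v (Pi.single w 1)

/-- Expansion of the determinant along row `v` and then column `v`. -/
theorem det_subMat_expand (x : ℝ) {W : Finset V} {v : V} (hv : v ∈ W) (s : Sym2 V → Bool) :
    (subMat H x W s).det = x * (subMat H x (W.erase v) s).det +
      ∑ u ∈ Finset.univ.erase v, ∑ w ∈ Finset.univ.erase v,
        subMat H x W s v u * subMat H x W s w v * (minorMat H x W v u w s).det := by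
  rw [det_eq_sum_updateRow _ v, ← Finset.add_sum_erase _ _ (Finset.mem_univ v)]
  congr 1
  · congr 1
    · simp [subMat_apply, hv]
    · rw [← det_updateCol_of_row (v := v) (by intro j; simp [Pi.single_apply])]
      congr 1
      ext i j
      by_cases hi : i = v <;> by_cases hj : j = v <;>
        simp [hi, hj, subMat_apply, updateRow_apply]
      exact fun h => hj h.symm
  · refine Finset.sum_congr rfl fun u hu => ?_
    have hu := Finset.ne_of_mem_erase hu
    rw [det_eq_sum_updateCol _ v, ← Finset.add_sum_erase _ _ (Finset.mem_univ v)]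
    rw [updateRow_self, Pi.single_eq_of_ne hu.symm, zero_mul, zero_add, Finset.mul_sum]
    refine Finset.sum_congr rfl fun w hw => ?_
    rw [updateRow_ne (Finset.ne_of_mem_erase hw), ← mul_assoc]
    rfl

/-- Exchanging rows `u` and `v` produces unit vectors on the diagonal positions `u` and `v`. -/
theorem det_minorMat_self (x : ℝ) (W : Finset V) {v u : V} (huv : u ≠ v) (s : Sym2 V → Bool) :
    (minorMat H x W v u u s).det = -(subMat H x ((W.erase v).erase u) s).det := by
  have h1 := det_permute (Equiv.swap u v) (minorMat H x W v u u s)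
  rw [Equiv.Perm.sign_swap huv] at h1
  set P := (minorMat H x W v u u s).submatrix (Equiv.swap u v) id with hP
  have hrow : ∀ j, P u j = if j = u then 1 else 0 := by
    intro j
    by_cases hj : j = v
    · subst hj; simp [hP, minorMat, huv.symm]
    · simp [hP, minorMat, Pi.single_apply, hj]
  have hcol : ∀ i, P i v = if i = v then 1 else 0 := by
    intro i
    by_cases hi : i = v
    · subst hi; simp [hP, minorMat]
    · by_cases hi' : i = u
      · subst hi'; simp [hP, minorMat, huv, huv.symm]
      · simp [hP, minorMat, hi, hi', Equiv.swap_apply_of_ne_of_ne hi' hi]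
  rw [← det_updateCol_of_row hrow, ← det_updateRow_of_col (v := v) (by
    intro i; rw [updateCol_ne huv.symm]; exact hcol i)] at h1
  have h2 : (P.updateCol u (Pi.single u 1)).updateRow v (Pi.single v 1) =
      subMat H x ((W.erase v).erase u) s := by
    ext i j
    rw [subMat_apply]
    by_cases hi : i = v
    · subst hi; simp [Pi.single_apply, eq_comm]
    · rw [updateRow_ne hi]
      by_cases hj : j = u
      · subst hj; simp [Pi.single_apply]
      · rw [updateCol_ne hj]
        by_cases hj' : j = v
        · subst hj'; simp [hcol, hi]
        · by_cases hi' : i = u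
          · subst hi'; simp [hrow, hj, Ne.symm hj]
          · simp [hP, minorMat, subMat_apply, Equiv.swap_apply_of_ne_of_ne hi' hi, hi, hj, hi', hj',
              updateCol_ne, updateRow_ne]
  rw [h2] at h1
  rw [h1]
  simp

/-- The terms with `u ≠ w` are odd in the sign of the pair `vu`, hence cancel. -/
theorem sum_offdiag_eq_zero (x : ℝ) (W : Finset V) {v u w : V} (hu : u ≠ v) (hw : w ≠ v)
    (huw : w ≠ u) :
    ∑ s, subMat H x W s v u * subMat H x W s w v * (minorMat H x W v u w s).det = 0 := by
  let φ : (Sym2 V → Bool) → (Sym2 V → Bool) := fun s => Function.update s s(v, u) (!s s(v, u))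
  have hφ : Function.Involutive φ := fun s => by
    simp [φ]
  have hsum := Equiv.sum_comp (hφ.toPerm φ) (fun s =>
    subMat H x W s v u * subMat H x W s w v * (minorMat H x W v u w s).det)
  have hterm : ∀ s, subMat H x W (φ s) v u * subMat H x W (φ s) w v *
      (minorMat H x W v u w (φ s)).det =
      -(subMat H x W s v u * subMat H x W s w v * (minorMat H x W v u w s).det) := by
    intro s
    have hne : ∀ i j, s(i, j) ≠ s(v, u) → φ s s(i, j) = s s(i, j) := fun i j h =>
      Function.update_of_ne h _ _
    have e1 : subMat H x W (φ s) v u = -subMat H x W s v u := by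
      simp only [subMat_apply, hu.symm, if_false]
      have : φ s s(v, u) = !s s(v, u) := Function.update_self _ _ _
      rw [this, boolSign_not]
      split_ifs <;> simp
    have e2 : subMat H x W (φ s) w v = subMat H x W s w v := by
      rw [subMat_apply, subMat_apply, hne]
      simp [hw, huw]
    have e3 : minorMat H x W v u w (φ s) = minorMat H x W v u w s := by
      ext i j
      by_cases hi : i = v
      · subst hi; simp [minorMat, updateCol_apply]
      · by_cases hj : j = v
        · subst hj; simp [minorMat]
        · rw [minorMat, minorMat, updateCol_ne hj, updateCol_ne hj, updateRow_ne hi, updateRow_ne hi,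
            subMat_apply, subMat_apply, hne]
          simp [hi, hj]
    rw [e1, e2, e3]
    ring
  simp only [Function.Involutive.coe_toPerm, hterm, Finset.sum_neg_distrib] at hsum
  linarith

/-- The vertex-deletion recursion of the matching polynomial. -/
theorem matchSum_rec (x : ℝ) {W : Finset V} {v : V} (hv : v ∈ W) :
    matchSum H x W = x * matchSum H x (W.erase v) -
      ∑ u ∈ W with H.Adj v u, matchSum H x ((W.erase v).erase u) := by
  simp only [matchSum]
  simp only [det_subMat_expand H x hv]
  rw [Finset.sum_add_distrib, ← Finset.mul_sum, sub_eq_add_neg, ← Finset.sum_neg_distrib]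
  congr 1
  rw [Finset.sum_comm]
  have hinner : ∀ u ∈ Finset.univ.erase v,
      ∑ s, ∑ w ∈ Finset.univ.erase v, subMat H x W s v u * subMat H x W s w v *
        (minorMat H x W v u w s).det =
      if u ∈ W ∧ H.Adj v u then -∑ s, (subMat H x ((W.erase v).erase u) s).det else 0 := by
    intro u hu
    have hu' := Finset.ne_of_mem_erase hu
    rw [Finset.sum_comm, Finset.sum_eq_single_of_mem u hu
      (fun w hw hwu => sum_offdiag_eq_zero H x W hu' (Finset.ne_of_mem_erase hw) hwu)]
    simp only [det_minorMat_self H x W hu']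
    by_cases hc : u ∈ W ∧ H.Adj v u
    · rw [if_pos hc, ← Finset.sum_neg_distrib]
      refine Finset.sum_congr rfl fun s _ => ?_
      have : subMat H x W s v u * subMat H x W s u v = 1 := by
        simp only [subMat_apply, hv, hc.1, hc.2, hc.2.symm, hu', hu'.symm, and_self, if_true,
          if_false, Sym2.eq_swap (a := u) (b := v), neg_mul_neg, boolSign_mul_self]
      rw [this, one_mul]
    · rw [if_neg hc]
      refine Finset.sum_eq_zero fun s _ => ?_
      have : subMat H x W s v u = 0 := by
        rw [subMat_apply]
        split_ifs <;> simp_all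
      rw [this, zero_mul, zero_mul]
  rw [Finset.sum_congr rfl hinner, ← Finset.sum_filter]
  refine Finset.sum_congr ?_ fun _ _ => rfl
  ext u
  simp only [Finset.mem_filter, Finset.mem_erase, Finset.mem_univ, and_true]
  exact ⟨fun h => h.2, fun h => ⟨h.2.ne', h⟩⟩

/-- The Heilmann-Lieb bound with `r = √(4k - 1) / 2`. A vertex with a neighbour outside `W` has at most
`k - 1` neighbours in `W`, and `x - (k - 1) / r ≥ r` for `x ≥ 2r`; an arbitrary vertex has at most `k`,
and still `x - k / r > 0`. -/
theorem matchSum_pos_aux {k : ℕ} (hk : 1 ≤ k) (hreg : H.IsRegularOfDegree k) {r x : ℝ}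
    (hr : 0 < r) (hr2 : 4 * r ^ 2 = 4 * k - 1) (hx : 2 * r ≤ x) (n : ℕ) :
    ∀ W : Finset V, W.card = n → 0 < matchSum H x W ∧
      ∀ v ∈ W, (∃ u ∉ W, H.Adj v u) → r * matchSum H x (W.erase v) ≤ matchSum H x W := by
  have hk' : (1 : ℝ) ≤ k := by exact_mod_cast hk
  induction n with
  | zero =>
    intro W hW
    rw [Finset.card_eq_zero] at hW
    subst hW
    refine ⟨?_, by simp⟩
    have : ∀ s, subMat H x ∅ s = 1 := fun s => by
      ext i j; simp [subMat_apply, Matrix.one_apply]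
    simp [matchSum, this]
  | succ n ih =>
    intro W hW
    have hcard : ∀ v ∈ W, (W.erase v).card = n := fun v hv => by
      rw [Finset.card_erase_of_mem hv, hW]; rfl
    have step : ∀ v ∈ W, ∀ c : ℕ, (W.filter (H.Adj v)).card ≤ c →
        (x - c / r) * matchSum H x (W.erase v) ≤ matchSum H x W := by
      intro v hv c hc
      obtain ⟨hp, hb⟩ := ih _ (hcard v hv)
      rw [matchSum_rec H x hv, sub_mul]
      refine sub_le_sub_left ?_ _
      have h1 : ∀ u ∈ W.filter (H.Adj v), matchSum H x ((W.erase v).erase u) ≤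
          matchSum H x (W.erase v) / r := by
        intro u hu
        rw [Finset.mem_filter] at hu
        rw [le_div_iff₀ hr, mul_comm]
        exact hb u (Finset.mem_erase.mpr ⟨hu.2.ne', hu.1⟩) ⟨v, by simp, hu.2.symm⟩
      refine (Finset.sum_le_card_nsmul _ _ _ h1).trans ?_
      rw [nsmul_eq_mul, div_mul_eq_mul_div, ← mul_div_assoc]
      gcongr
    have hdeg : ∀ v, (Finset.univ.filter (H.Adj v)).card = k := fun v => by
      rw [← SimpleGraph.neighborFinset_eq_filter, SimpleGraph.card_neighborFinset_eq_degree, hreg v]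
    refine ⟨?_, ?_⟩
    · obtain ⟨v, hv⟩ : W.Nonempty := by rw [← Finset.card_pos]; omega
      refine lt_of_lt_of_le (mul_pos ?_ (ih _ (hcard v hv)).1)
        (step v hv k ((Finset.card_le_card (Finset.filter_subset_filter _
          (Finset.subset_univ W))).trans (hdeg v).le))
      rw [sub_pos, div_lt_iff₀ hr]
      nlinarith
    · rintro v hv ⟨u, hu, huv⟩
      refine le_trans (mul_le_mul_of_nonneg_right ?_ (ih _ (hcard v hv)).1.le)
        (step v hv (k - 1) ?_)
      · rw [Nat.cast_sub hk, le_sub_iff_add_le, ← le_sub_iff_add_le', div_le_iff₀ hr]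
        push_cast
        nlinarith
      · rw [← hdeg v]
        refine Nat.le_sub_one_of_lt (Finset.card_lt_card ?_)
        refine Finset.ssubset_iff_subset_ne.mpr
          ⟨Finset.filter_subset_filter _ (Finset.subset_univ W), fun h => hu ?_⟩
        have : u ∈ Finset.univ.filter (H.Adj v) := by simp [huv]
        rw [← h] at this
        exact (Finset.mem_filter.mp this).1
end
/-! ### Signings of regular bipartite graphs -/

section
variable {V : Type*} [Fintype V] [DecidableEq V] (H : SimpleGraph V) [DecidableRel H.Adj]

/-- The signed adjacency matrix of `H`. The sign function is defined on all unordered pairs; only its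
values on edges matter. -/
def signedAdj (s : Sym2 V → Bool) : Matrix V V ℝ :=
  Matrix.of fun i j => if H.Adj i j then boolSign (s s(i, j)) else 0

theorem signedAdj_apply (s : Sym2 V → Bool) (i j : V) :
    signedAdj H s i j = if H.Adj i j then boolSign (s s(i, j)) else 0 := rfl

/-- For `e = {p, q}` with `p ≠ q`, the matrix `(e_p + b e_q) (e_p + b e_q)ᵀ`. -/
def edgeMat (e : Sym2 V) (b : Bool) : Matrix V V ℝ :=
  Matrix.of fun i j => if i ∈ e ∧ j ∈ e then (if i = j then 1 else boolSign b) else 0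

theorem edgeMat_apply (e : Sym2 V) (b : Bool) (i j : V) :
    edgeMat e b i j = if i ∈ e ∧ j ∈ e then (if i = j then 1 else boolSign b) else 0 := rfl

theorem exists_edgeMat_eq_vecMulVec {e : Sym2 V} (he : ¬ e.IsDiag) (b : Bool) :
    ∃ u, edgeMat e b = vecMulVec u u := by
  induction e using Sym2.ind with
  | _ p q =>
    rw [Sym2.mk_isDiag_iff] at he
    refine ⟨fun i => if i = p then 1 else if i = q then boolSign b else 0, ?_⟩
    ext i j
    rw [edgeMat_apply, vecMulVec_apply]
    by_cases hip : i = p <;> by_cases hiq : i = q <;> by_cases hjp : j = p <;>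
      by_cases hjq : j = q <;> simp_all [boolSign_mul_self, Ne.symm he]

/-- The diagonal of the sum of all `edgeMat` is the degree, so `A^s` is the sum shifted by `-k I`. -/
theorem shift_add_sum_edgeMat {k : ℕ} (hreg : H.IsRegularOfDegree k) (s : Sym2 V → Bool) :
    -(Matrix.scalar V (k : ℝ)) + ∑ e ∈ H.edgeFinset, edgeMat e (s e) = signedAdj H s := by
  ext i j
  rw [Matrix.add_apply, Matrix.sum_apply, signedAdj_apply, Matrix.neg_apply, Matrix.scalar_apply,
    Matrix.diagonal_apply]
  simp only [edgeMat_apply]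
  by_cases hij : i = j
  · subst hij
    have : (∑ e ∈ H.edgeFinset, if i ∈ e then (1 : ℝ) else 0) = k := by
      rw [Finset.sum_boole, ← SimpleGraph.incidenceFinset_eq_filter,
        SimpleGraph.card_incidenceFinset_eq_degree, hreg i]
    simp [this]
  · simp only [hij, if_false, (Sym2.mem_and_mem_iff hij)]
    rw [Finset.sum_ite_eq']
    simp

/-- With nothing deleted, the matrix of the Godsil-Gutman average is `x I - A^s`. -/
theorem subMat_univ (x : ℝ) (s : Sym2 V → Bool) :
    subMat H x Finset.univ s = Matrix.scalar V x - signedAdj H s := by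
  ext i j
  by_cases hij : i = j
  · subst hij; simp [subMat_apply, signedAdj_apply]
  · simp only [subMat_apply, signedAdj_apply, hij, Matrix.sub_apply, Finset.mem_univ, and_self,
      if_true, if_false, Matrix.scalar_apply, Matrix.diagonal_apply_ne _ hij]
    split_ifs <;> simp

/-- Every `k`-regular graph with `k ≥ 1` has a signing with all eigenvalues below `√(4k - 1)`. -/
theorem exists_signs_eigenvalue_lt {k : ℕ} (hk : 1 ≤ k) (hreg : H.IsRegularOfDegree k) :
    ∃ s : Sym2 V → Bool, ∀ (μ : ℝ) (X : V → ℝ), X ≠ 0 → signedAdj H s *ᵥ X = μ • X →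
      μ < Real.sqrt (4 * k - 1) := by
  have hk' : (1 : ℝ) ≤ k := by exact_mod_cast hk
  set R := Real.sqrt (4 * k - 1) with hR
  have hR0 : 0 < R := Real.sqrt_pos.mpr (by linarith)
  have hR2 : R ^ 2 = 4 * k - 1 := Real.sq_sqrt (by linarith)
  obtain ⟨s, hs⟩ := exists_signs_pos (L := edgeMat) (S := H.edgeFinset)
    (fun e he b => exists_edgeMat_eq_vecMulVec
      (H.not_isDiag_of_mem_edgeFinset he) b)
    (R := R) (B := -(Matrix.scalar V (k : ℝ)))
    (by simp [Matrix.IsSymm]) (fun x hx => by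
      have h := (matchSum_pos_aux H hk hreg (r := R / 2) (x := x) (by linarith)
        (by linarith) (by linarith) _ Finset.univ rfl).1
      rw [matchSum] at h
      simp only [subMat_univ] at h
      simpa only [eval_sumPoly, shift_add_sum_edgeMat H hreg] using h)
  refine ⟨s, fun μ X hX hμ => ?_⟩
  by_contra! hcon
  have h := hs μ hcon
  rw [shift_add_sum_edgeMat H hreg] at h
  refine h.ne' (Matrix.exists_mulVec_eq_zero_iff.mp ⟨X, hX, ?_⟩)
  rw [sub_mulVec, hμ]
  ext i
  simp

/-- **Marcus, Spielman, Srivastava** for bipartite regular graphs, with the slightly weaker bound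
`√(4k - 1)` in place of `2√(k - 1)`. Changing the sign of a vector on one colour class turns an
eigenvector for `μ` into one for `-μ`, so the one-sided bound is two-sided. -/
theorem exists_signs_abs_eigenvalue_lt {k : ℕ} (hk : 1 ≤ k) (hreg : H.IsRegularOfDegree k)
    (hbip : H.Colorable 2) :
    ∃ s : Sym2 V → Bool, ∀ (μ : ℝ) (X : V → ℝ), X ≠ 0 → signedAdj H s *ᵥ X = μ • X →
      |μ| < Real.sqrt (4 * k - 1) := by
  obtain ⟨s, hs⟩ := exists_signs_eigenvalue_lt H hk hreg
  obtain ⟨C⟩ := hbip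
  refine ⟨s, fun μ X hX hμ => abs_lt.mpr ⟨?_, hs μ X hX hμ⟩⟩
  let ε : V → ℝ := fun i => if C i = 0 then 1 else -1
  have hε : ∀ i, ε i ≠ 0 := fun i => by simp only [ε]; split_ifs <;> norm_num
  have hadj : ∀ i j, H.Adj i j → ε j = -ε i := fun i j h => by
    have h1 := C.valid h
    simp only [ε]
    generalize C i = a at h1
    generalize C j = b at h1
    fin_cases a <;> fin_cases b <;> simp_all
  rw [neg_lt]
  refine hs (-μ) (fun i => ε i * X i) ?_ ?_
  · obtain ⟨i, hi⟩ := Function.ne_iff.mp hX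
    exact Function.ne_iff.mpr ⟨i, mul_ne_zero (hε i) hi⟩
  · ext i
    have h1 := congrFun hμ i
    simp only [mulVec, dotProduct, Pi.smul_apply, smul_eq_mul] at h1 ⊢
    calc ∑ j, signedAdj H s i j * (ε j * X j) = ∑ j, -ε i * (signedAdj H s i j * X j) := by
          refine Finset.sum_congr rfl fun j _ => ?_
          rw [signedAdj_apply]
          split_ifs with h
          · rw [hadj i j h]; ring
          · ring
      _ = -μ * (ε i * X i) := by rw [← Finset.mul_sum, h1]; ring
end

theorem lex_K2_good_signing_of_bipartite_decomposition {V : Type*} [Fintype V]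
    [DecidableEq V]
    (G H₁ H₂ : SimpleGraph V)
    [DecidableRel G.Adj] [DecidableRel H₁.Adj] [DecidableRel H₂.Adj]
    (d : ℕ) (hd : Even d)
    (hnonbip : ¬ G.Colorable 2)
    (hbip₁ : H₁.Colorable 2) (hbip₂ : H₂.Colorable 2)
    (hreg : G.IsRegularOfDegree d)
    (hreg₁ : H₁.IsRegularOfDegree (d / 2))
    (hreg₂ : H₂.IsRegularOfDegree (d / 2))
    (hdisj : ∀ u v : V, ¬ (H₁.Adj u v ∧ H₂.Adj u v))
    (hunion : ∀ u v : V, G.Adj u v ↔ H₁.Adj u v ∨ H₂.Adj u v) :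
    ∃ M : Matrix (V × Fin 2) (V × Fin 2) ℝ, M.IsSymm ∧
      (∀ p q : V × Fin 2, ¬ G.Adj p.1 q.1 → M p q = 0) ∧
      (∀ p q : V × Fin 2, G.Adj p.1 q.1 → M p q = 1 ∨ M p q = -1) ∧
      (∀ (μ : ℝ) (X : V × Fin 2 → ℝ), X ≠ 0 → M.mulVec X = μ • X →
        |μ| ≤ 2 * Real.sqrt (2 * (d : ℝ) - 1)) := by
  obtain ⟨k, rfl⟩ := hd
  have hk2 : (k + k) / 2 = k := by omega
  rw [hk2] at hreg₁ hreg₂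
  have hk : 1 ≤ k := by
    rcases Nat.eq_zero_or_pos k with rfl | h
    -- a graph without edges is bipartite
    · refine absurd ⟨SimpleGraph.Coloring.mk (fun _ => 0) fun {u v} huv => ?_⟩ hnonbip
      have h1 := hreg u
      have h2 := (G.degree_pos_iff_exists_adj u).mpr ⟨v, huv⟩
      omega
    · exact h
  obtain ⟨s₁, hs₁⟩ := exists_signs_abs_eigenvalue_lt H₁ hk hreg₁ hbip₁
  obtain ⟨s₂, hs₂⟩ := exists_signs_abs_eigenvalue_lt H₂ hk hreg₂ hbip₂
  have hcast : (2 * ((k + k : ℕ) : ℝ) - 1) = 4 * k - 1 := by push_cast; ring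
  rw [hcast]
  have hbs : ∀ b, boolSign b = 1 ∨ boolSign b = -1 := fun b => by cases b <;> simp [boolSign]
  refine ⟨Matrix.of fun p q => signedAdj H₁ s₁ p.1 q.1 +
    (if p.2 = q.2 then 1 else -1) * signedAdj H₂ s₂ p.1 q.1, ?_, ?_, ?_, ?_⟩
  · ext p q
    simp only [transpose_apply, of_apply, signedAdj_apply, H₁.adj_comm q.1 p.1,
      H₂.adj_comm q.1 p.1, Sym2.eq_swap (a := q.1) (b := p.1), eq_comm (a := q.2) (b := p.2)]
  · intro p q h
    rw [hunion, not_or] at h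
    simp [signedAdj_apply, h.1, h.2]
  · intro p q h
    rcases (hunion _ _).mp h with h | h
    · have h' : ¬ H₂.Adj p.1 q.1 := fun h2 => hdisj _ _ ⟨h, h2⟩
      simpa [signedAdj_apply, h, h'] using hbs _
    · have h' : ¬ H₁.Adj p.1 q.1 := fun h1 => hdisj _ _ ⟨h1, h⟩
      have := hbs (s₂ s(p.1, q.1))
      by_cases hpq : p.2 = q.2
      · simpa [signedAdj_apply, h, h', hpq] using this
      · rcases this with e | e <;> simp [signedAdj_apply, h, h', hpq, e]
  · intro μ X hX hμ
    -- the row `(i, a)` of `M X = μ X`, with `M = B₁ ⊗ J + B₂ ⊗ K`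
    have hrow : ∀ (i : V) (a : Fin 2),
        ∑ j, (signedAdj H₁ s₁ i j * (X (j, 0) + X (j, 1)) +
          (if a = 0 then 1 else -1) * (signedAdj H₂ s₂ i j * (X (j, 0) - X (j, 1)))) =
        μ * X (i, a) := by
      intro i a
      have h1 := congrFun hμ (i, a)
      simp only [mulVec, dotProduct, Pi.smul_apply, smul_eq_mul, of_apply,
        Fintype.sum_prod_type, Fin.sum_univ_two] at h1
      rw [← h1]
      refine Finset.sum_congr rfl fun j _ => ?_
      fin_cases a <;> simp <;> ring
    have habs : |μ| = 2 * |μ / 2| := by rw [abs_div, abs_two]; ring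
    have hY : signedAdj H₁ s₁ *ᵥ (fun i => X (i, 0) + X (i, 1)) =
        (μ / 2) • fun i => X (i, 0) + X (i, 1) := by
      ext i
      have h0 := hrow i 0
      have h1 := hrow i 1
      simp only [Finset.sum_add_distrib, ← Finset.mul_sum, if_true, one_ne_zero, if_false] at h0 h1
      simp only [mulVec, dotProduct, Pi.smul_apply, smul_eq_mul]
      linarith
    have hZ : signedAdj H₂ s₂ *ᵥ (fun i => X (i, 0) - X (i, 1)) =
        (μ / 2) • fun i => X (i, 0) - X (i, 1) := by
      ext i
      have h0 := hrow i 0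
      have h1 := hrow i 1
      simp only [Finset.sum_add_distrib, ← Finset.mul_sum, if_true, one_ne_zero, if_false] at h0 h1
      simp only [mulVec, dotProduct, Pi.smul_apply, smul_eq_mul]
      linarith
    rw [habs]
    refine mul_le_mul_of_nonneg_left ?_ zero_le_two
    by_cases hY0 : (fun i => X (i, 0) + X (i, 1)) = 0
    · refine (hs₂ _ _ (fun hZ0 => hX ?_) hZ).le
      ext ⟨i, a⟩
      have e1 := congrFun hY0 i
      have e2 := congrFun hZ0 i
      simp only [Pi.zero_apply] at e1 e2 ⊢
      fin_cases a <;> simp <;> linarith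
    · exact (hs₁ _ _ hY0 hY).le
end

section
/- Let G be a finite d-regular simple graph (d > 1) admitting a good signing, i.e., a signing σ with ρ(G^σ) ≤ 2√(d−1). Then the lexicographic product G ∘ K̄₄, which is 4d-regular, admits a good signing: there exists a signing σ' of G ∘ K̄₄ with ρ((G ∘ K̄₄)^{σ'}) ≤ 2√(4d−1). Explicitly, one may take the signing whose signed adjacency matrix M on V(G) × {0,1,2,3} is given by M_{(x,i),(y,j)} = (A^σ)_{xy} if i ≠ j and M_{(x,i),(y,j)} = −(A^σ)_{xy} if i = j. -/
open Matrix

/-!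
Writing `X = (X₀, …, X₃)` with `Xᵢ : V → ℝ`, the matrix `M` is `S ⊗ (J - 2I)`, where `J` is the
`4 × 4` all-ones matrix; `J - 2I` squares to `4I`, with eigenvalue `2` on constants and `-2` on
vectors of sum zero. Let `T = ∑ᵢ Xᵢ`. The equation `M X = μ X` reads `S T - 2 S Xᵢ = μ Xᵢ` for each
`i`, and summing over `i` gives `2 S T = μ T`. So if `T ≠ 0` then `μ / 2` is an eigenvalue of `S`,
while if `T = 0` any nonzero `Xᵢ` shows that `-μ / 2` is one. Either way
`|μ| ≤ 4 √(d - 1) = 2 √(4d - 4) ≤ 2 √(4d - 1)`.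
-/

/-- Let `G` be a finite `d`-regular simple graph (`d > 1`) admitting a
good signing `σ`, i.e. one whose signed adjacency matrix `S` satisfies
`ρ(G^σ) ≤ 2√(d − 1)`. Then the lexicographic product `G ∘ K̄₄`, which is `4d`-regular,
admits a good signing: the signing `σ'` of `G ∘ K̄₄` whose signed adjacency matrix `M` on
`V(G) × {0,1,2,3}` is given by `M (x,i) (y,j) = S x y` if `i ≠ j` and `= −S x y` if
`i = j` satisfies `ρ((G ∘ K̄₄)^{σ'}) ≤ 2√(4d − 1)`. -/
theorem lex_K4_good_signing {V : Type*} [Fintype V] [DecidableEq V]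
    (G : SimpleGraph V) [DecidableRel G.Adj]
    (d : ℕ) (hd : 1 < d) (hreg : G.IsRegularOfDegree d)
    (S : Matrix V V ℝ)
    (hSsym : S.IsSymm)
    (hS0 : ∀ u v : V, ¬ G.Adj u v → S u v = 0)
    (hS1 : ∀ u v : V, G.Adj u v → S u v = 1 ∨ S u v = -1)
    (hgood : ∀ (μ : ℝ) (X : V → ℝ), X ≠ 0 → S.mulVec X = μ • X →
      |μ| ≤ 2 * Real.sqrt ((d : ℝ) - 1))
    (M : Matrix (V × Fin 4) (V × Fin 4) ℝ)
    (hM : ∀ (x y : V) (i j : Fin 4),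
      M (x, i) (y, j) = if i = j then -(S x y) else S x y) :
    ∀ (μ : ℝ) (X : V × Fin 4 → ℝ), X ≠ 0 → M.mulVec X = μ • X →
      |μ| ≤ 2 * Real.sqrt (4 * (d : ℝ) - 1) := by
  intro μ X hX hMX
  have key : ∀ (i : Fin 4) (x : V),
      ∑ y, S x y * (∑ j, X (y, j)) - 2 * ∑ y, S x y * X (y, i) = μ * X (x, i) := by
    intro i x
    have h := congrFun hMX (x, i)
    simp only [mulVec, dotProduct, Fintype.sum_prod_type, hM, Pi.smul_apply, smul_eq_mul] at h
    rw [← h, Finset.mul_sum, ← Finset.sum_sub_distrib]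
    refine Finset.sum_congr rfl fun y _ => ?_
    fin_cases i <;> simp [Fin.sum_univ_four] <;> ring
  have half : |μ / 2| ≤ 2 * Real.sqrt ((d : ℝ) - 1) := by
    by_cases hT : (fun y => ∑ j, X (y, j)) = 0
    · obtain ⟨⟨v, i⟩, hv⟩ := Function.ne_iff.mp hX
      rw [← abs_neg]
      refine hgood _ (fun y => X (y, i)) (Function.ne_iff.mpr ⟨v, hv⟩) ?_
      funext x
      have hk := key i x
      have hT' : ∀ y, ∑ j, X (y, j) = 0 := fun y => congrFun hT y
      simp only [hT', mul_zero, Finset.sum_const_zero] at hk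
      simp only [mulVec, dotProduct, Pi.smul_apply, smul_eq_mul]
      linarith
    · refine hgood _ _ hT ?_
      funext x
      have hsplit : ∑ y, S x y * (∑ j, X (y, j)) = ∑ j, ∑ y, S x y * X (y, j) := by
        simp only [Finset.mul_sum]
        exact Finset.sum_comm
      have h0 := key 0 x
      have h1 := key 1 x
      have h2 := key 2 x
      have h3 := key 3 x
      rw [Fin.sum_univ_four (fun j => ∑ y, S x y * X (y, j))] at hsplit
      simp only [mulVec, dotProduct, Pi.smul_apply, smul_eq_mul]
      rw [Fin.sum_univ_four (fun j => X (x, j))]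
      linarith
  have hsqrt : 2 * Real.sqrt ((d : ℝ) - 1) ≤ Real.sqrt (4 * (d : ℝ) - 1) := by
    have hd' : (1 : ℝ) < d := by exact_mod_cast hd
    apply Real.le_sqrt_of_sq_le
    rw [mul_pow, Real.sq_sqrt (by linarith)]
    linarith
  rw [abs_div, abs_two] at half
  linarith
end

section
/- Let G be a finite simple graph with a signing σ and signed adjacency matrix S = A^σ. Define the matrix M indexed by V(G) × {0,1,2,3} by M_{(x,i),(y,j)} = S_{xy} if i ≠ j and M_{(x,i),(y,j)} = −S_{xy} if i = j (this is the signed adjacency matrix of a signing σ' of the lexicographic product G ∘ K̄₄). Then the spectral radius of M equals twice the spectral radius of S: ρ((G ∘ K̄₄)^{σ'}) = 2·ρ(G^σ). -/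
open Matrix

/-!
`M` is the Kronecker product `S ⊗ Q` with `Q = J - 2I` of order 4, and the eigenvalues of `Q` are
`2` (on constant vectors) and `-2` (on vectors with coordinate sum zero). Hence the set of absolute
values of the eigenvalues of `M` is exactly twice the corresponding set for `S`, and the suprema
follow. An eigenvector of `S` extends constantly along the fibres to an eigenvector of `M`
(`eigen_lift`); conversely, an eigenvector of `M` either has a nonzero fibre sum, which is an
eigenvector of `S` for `μ / 2`, or has zero fibre sums, and then any nonzero slice is an
eigenvector of `S` for `-μ / 2` (`eigen_descend`).
-/

/-- The action of `M` expressed through `Q = J - 2I` on each fibre. -/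
lemma mulVec_lex {V : Type*} [Fintype V]
    (S : Matrix V V ℝ) (M : Matrix (V × Fin 4) (V × Fin 4) ℝ)
    (hM : ∀ (x y : V) (i j : Fin 4),
      M (x, i) (y, j) = if i = j then -(S x y) else S x y)
    (X : V × Fin 4 → ℝ) (x : V) (i : Fin 4) :
    M.mulVec X (x, i) =
      S.mulVec (fun y => ∑ j, X (y, j)) x - 2 * S.mulVec (fun y => X (y, i)) x := by
  simp only [Matrix.mulVec, dotProduct, Fintype.sum_prod_type, hM]
  rw [Finset.mul_sum, ← Finset.sum_sub_distrib]
  refine Finset.sum_congr rfl fun y _ => ?_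
  fin_cases i <;> simp [Fin.sum_univ_four] <;> ring

lemma eigen_lift {V : Type*} [Fintype V]
    (S : Matrix V V ℝ) (M : Matrix (V × Fin 4) (V × Fin 4) ℝ)
    (hM : ∀ (x y : V) (i j : Fin 4),
      M (x, i) (y, j) = if i = j then -(S x y) else S x y)
    (μ : ℝ) (Y : V → ℝ) (hY : Y ≠ 0) (h : S.mulVec Y = μ • Y) :
    ∃ X : V × Fin 4 → ℝ, X ≠ 0 ∧ M.mulVec X = (2 * μ) • X := by
  refine ⟨fun p => Y p.1, fun h0 => hY (funext fun x => congrFun h0 (x, 0)), ?_⟩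
  ext ⟨x, i⟩
  have hsum : (fun y : V => ∑ _j : Fin 4, Y y) = (4 : ℝ) • Y := by
    ext y; simp
  rw [mulVec_lex S M hM]
  simp only [hsum, Matrix.mulVec_smul, h, Pi.smul_apply, smul_eq_mul]
  ring

lemma eigen_descend {V : Type*} [Fintype V]
    (S : Matrix V V ℝ) (M : Matrix (V × Fin 4) (V × Fin 4) ℝ)
    (hM : ∀ (x y : V) (i j : Fin 4),
      M (x, i) (y, j) = if i = j then -(S x y) else S x y)
    (μ : ℝ) (X : V × Fin 4 → ℝ) (hX : X ≠ 0) (h : M.mulVec X = μ • X) :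
    ∃ ν : ℝ, (∃ Y : V → ℝ, Y ≠ 0 ∧ S.mulVec Y = ν • Y) ∧ |μ| = 2 * |ν| := by
  have key : ∀ x i, S.mulVec (fun y => ∑ j, X (y, j)) x
      - 2 * S.mulVec (fun y => X (y, i)) x = μ * X (x, i) := fun x i => by
    rw [← mulVec_lex S M hM, h]; rfl
  by_cases hY : (fun y => ∑ j, X (y, j)) = 0
  · obtain ⟨⟨x₀, i⟩, hi⟩ := Function.ne_iff.mp hX
    refine ⟨-μ / 2, ⟨fun y => X (y, i), fun h0 => hi (congrFun h0 x₀), ?_⟩, ?_⟩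
    · ext x
      have := key x i
      rw [hY, Matrix.mulVec_zero] at this
      simp only [Pi.zero_apply, Pi.smul_apply, smul_eq_mul] at this ⊢
      linarith
    · rw [abs_div, abs_neg, abs_two]; ring
  · refine ⟨μ / 2, ⟨_, hY, ?_⟩, ?_⟩
    · ext x
      have hadd : S.mulVec (fun y => ∑ j, X (y, j)) x
          = ∑ j, S.mulVec (fun y => X (y, j)) x := by
        simp only [Matrix.mulVec, dotProduct, Finset.mul_sum]
        exact Finset.sum_comm
      have h0 := key x 0
      have h1 := key x 1
      have h2 := key x 2
      have h3 := key x 3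
      rw [Fin.sum_univ_four] at hadd
      simp only [Pi.smul_apply, smul_eq_mul]
      rw [Fin.sum_univ_four (fun j => X (x, j))]
      linarith
    · rw [abs_div, abs_two]; ring

/-- Let `G` be a finite simple graph with a signing `σ` and signed
adjacency matrix `S`. Let `M`, indexed by `V(G) × {0,1,2,3}`, be given by
`M (x,i) (y,j) = S x y` if `i ≠ j` and `= −S x y` if `i = j` (the signed adjacency matrix
of a signing `σ'` of `G ∘ K̄₄`). Then the spectral radius of `M` (the supremum of the
absolute values of its eigenvalues) equals twice the spectral radius of `S`:
`ρ((G ∘ K̄₄)^{σ'}) = 2 · ρ(G^σ)`. -/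
theorem lex_K4_spectral_radius {V : Type*} [Fintype V] [DecidableEq V]
    (G : SimpleGraph V) [DecidableRel G.Adj]
    (S : Matrix V V ℝ)
    (hSsym : S.IsSymm)
    (hS0 : ∀ u v : V, ¬ G.Adj u v → S u v = 0)
    (hS1 : ∀ u v : V, G.Adj u v → S u v = 1 ∨ S u v = -1)
    (M : Matrix (V × Fin 4) (V × Fin 4) ℝ)
    (hM : ∀ (x y : V) (i j : Fin 4),
      M (x, i) (y, j) = if i = j then -(S x y) else S x y) :
    sSup {x : ℝ | ∃ μ : ℝ, (∃ X : V × Fin 4 → ℝ, X ≠ 0 ∧ M.mulVec X = μ • X) ∧ x = |μ|}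
      = 2 * sSup {x : ℝ | ∃ μ : ℝ, (∃ X : V → ℝ, X ≠ 0 ∧ S.mulVec X = μ • X) ∧ x = |μ|} := by
  rw [← smul_eq_mul, ← Real.sSup_smul_of_nonneg zero_le_two]
  congr 1
  ext r
  simp only [Set.mem_smul_set, Set.mem_setOf_eq, smul_eq_mul]
  constructor
  · rintro ⟨μ, ⟨X, hX, h⟩, rfl⟩
    obtain ⟨ν, hν, hμν⟩ := eigen_descend S M hM μ X hX h
    exact ⟨|ν|, ⟨ν, hν, rfl⟩, hμν.symm⟩
  · rintro ⟨_, ⟨μ, ⟨Y, hY, h⟩, rfl⟩, rfl⟩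
    exact ⟨2 * μ, eigen_lift S M hM μ Y hY h, by rw [abs_mul, abs_two]⟩
end

section
/- Let G be a finite simple graph with two signings σ and σ', with signed adjacency matrices S = A^σ and S' = A^{σ'}. Let M be the matrix indexed by V(G) × {0,1} defined by M_{(u,i),(v,j)} = (S'_{uv} + (−1)^{i+j} S_{uv})/2 (the signed adjacency matrix of the signing φ of the 2-lift of G determined by τ(uv) = σ(uv)σ'(uv), in which all lifted edges over uv receive sign σ'(uv)). Then every eigenvalue of M is an eigenvalue of S or an eigenvalue of S'. -/
open Matrix

/-!
The space of functions on `V × {0,1}` splits into functions that are symmetric and antisymmetric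
in the fibre coordinate. On the symmetric part `M` acts as `S'`, on the antisymmetric part as `S`.
Hence for an eigenvector `X` with fibre components `X₀`, `X₁`, both `S' (X₀ + X₁) = μ (X₀ + X₁)` and
`S (X₀ - X₁) = μ (X₀ - X₁)`; as `X ≠ 0`, at least one of `X₀ + X₁`, `X₀ - X₁` is nonzero.
-/

/-- Let `G` be a finite simple graph with two signings `σ`, `σ'`, with
signed adjacency matrices `S = A^σ` and `S' = A^{σ'}`. Let `M` be the matrix indexed by
`V(G) × {0,1}` defined by `M (u,i) (v,j) = (S' u v + (−1)^{i+j} S u v) / 2` (the signed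
adjacency matrix of the signing `φ` of the 2-lift of `G` determined by
`τ(uv) = σ(uv)σ'(uv)`, in which all lifted edges over `uv` receive sign `σ'(uv)`). Then
every eigenvalue of `M` is an eigenvalue of `S` or an eigenvalue of `S'`. -/
theorem two_lift_eigenvalues {V : Type*} [Fintype V] [DecidableEq V]
    (G : SimpleGraph V) [DecidableRel G.Adj]
    (S S' : Matrix V V ℝ)
    (hSsym : S.IsSymm)
    (hS0 : ∀ u v : V, ¬ G.Adj u v → S u v = 0)
    (hS1 : ∀ u v : V, G.Adj u v → S u v = 1 ∨ S u v = -1)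
    (hS'sym : S'.IsSymm)
    (hS'0 : ∀ u v : V, ¬ G.Adj u v → S' u v = 0)
    (hS'1 : ∀ u v : V, G.Adj u v → S' u v = 1 ∨ S' u v = -1)
    (M : Matrix (V × Fin 2) (V × Fin 2) ℝ)
    (hM : ∀ (u v : V) (i j : Fin 2),
      M (u, i) (v, j) = (S' u v + (-1 : ℝ) ^ ((i : ℕ) + (j : ℕ)) * S u v) / 2) :
    ∀ (μ : ℝ) (X : V × Fin 2 → ℝ), X ≠ 0 → M.mulVec X = μ • X →
      (∃ Y : V → ℝ, Y ≠ 0 ∧ S.mulVec Y = μ • Y) ∨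
      (∃ Y : V → ℝ, Y ≠ 0 ∧ S'.mulVec Y = μ • Y) := by
  intro μ X hX h
  have h_entry : ∀ (u : V) (i : Fin 2),
      ∑ v, (M (u, i) (v, 0) * X (v, 0) + M (u, i) (v, 1) * X (v, 1)) = μ * X (u, i) := by
    intro u i
    have := congrFun h (u, i)
    simpa [Matrix.mulVec, dotProduct, Fintype.sum_prod_type] using this
  by_cases hD : (fun v => X (v, 0) - X (v, 1)) = 0
  · right
    refine ⟨fun v => X (v, 0) + X (v, 1), ?_, ?_⟩
    · intro hP
      apply hX
      funext ⟨v, i⟩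
      have h1 := congrFun hD v
      have h2 := congrFun hP v
      simp only [Pi.zero_apply] at h1 h2 ⊢
      fin_cases i <;> simp <;> linarith
    · funext u
      simp only [Matrix.mulVec, dotProduct, Pi.smul_apply, smul_eq_mul]
      rw [mul_add, ← h_entry u 0, ← h_entry u 1, ← Finset.sum_add_distrib]
      refine Finset.sum_congr rfl fun v _ => ?_
      simp only [hM]
      simp
      ring
  · left
    refine ⟨_, hD, ?_⟩
    funext u
    simp only [Matrix.mulVec, dotProduct, Pi.smul_apply, smul_eq_mul]
    rw [mul_sub, ← h_entry u 0, ← h_entry u 1, ← Finset.sum_sub_distrib]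
    refine Finset.sum_congr rfl fun v _ => ?_
    simp only [hM]
    simp
    ring
end
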